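/- arXiv:math/0701925 — 3 statements merged into one kernel-verified Lean document; each statement's English description precedes it below -/
import Mathlib

section
/- Let Γ be a group generated by d elements and let N = ℤΓ be the regular module. If N₀ ≤ N is a ℤΓ-submodule of finite index b, then N₀ can be generated as a ℤΓ-module by at most 1 + (2d+1)·log₂(b) elements. -/
lemma aux_small_gen (Q : Type*) [AddCommGroup Q] [Finite Q] :
    ∃ T : Finset Q, AddSubgroup.closure (T : Set Q) = ⊤ ∧ 2 ^ T.card ≤ Nat.card Q := by
  classical
  have key : ∀ n : ℕ, ∀ T : Finset Q,
      2 ^ T.card ≤ Nat.card (AddSubgroup.closure (T : Set Q)) →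
      Nat.card Q - Nat.card (AddSubgroup.closure (T : Set Q)) ≤ n →
      ∃ T : Finset Q, AddSubgroup.closure (T : Set Q) = ⊤ ∧ 2 ^ T.card ≤ Nat.card Q := by
    intro n
    induction n with
    | zero =>
      intro T h1 h2
      have h3 := AddSubgroup.card_le_card_addGroup (AddSubgroup.closure (T : Set Q))
      exact ⟨T, AddSubgroup.eq_top_of_card_eq _ (by omega), h1.trans h3⟩
    | succ n ih =>
      intro T h1 h2
      have h3 := AddSubgroup.card_le_card_addGroup (AddSubgroup.closure (T : Set Q))
      by_cases htop : AddSubgroup.closure (T : Set Q) = ⊤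
      · exact ⟨T, htop, h1.trans h3⟩
      obtain ⟨x, hx⟩ : ∃ x, x ∉ AddSubgroup.closure (T : Set Q) := by
        by_contra! h
        exact htop (by ext y; simp [h y])
      have hle : AddSubgroup.closure (T : Set Q) ≤
          AddSubgroup.closure ((insert x T : Finset Q) : Set Q) :=
        AddSubgroup.closure_mono (by simp)
      have hxin : x ∈ AddSubgroup.closure ((insert x T : Finset Q) : Set Q) :=
        AddSubgroup.subset_closure (by simp)
      have hdvd := AddSubgroup.card_dvd_of_le hle
      have hne : Nat.card (AddSubgroup.closure (T : Set Q)) ≠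
          Nat.card (AddSubgroup.closure ((insert x T : Finset Q) : Set Q)) := by
        intro h
        exact hx (by rw [AddSubgroup.eq_of_le_of_card_ge hle h.ge]; exact hxin)
      have hpos : 0 < Nat.card (AddSubgroup.closure ((insert x T : Finset Q) : Set Q)) :=
        Nat.card_pos
      have hpos' : 0 < Nat.card (AddSubgroup.closure (T : Set Q)) := Nat.card_pos
      obtain ⟨k, hk⟩ := hdvd
      have hk2 : 2 ≤ k := by
        rcases k with _ | _ | k
        · rw [Nat.mul_zero] at hk; omega
        · rw [Nat.zero_add, Nat.mul_one] at hk; omega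
        · omega
      have h4 : 2 * Nat.card (AddSubgroup.closure (T : Set Q)) ≤
          Nat.card (AddSubgroup.closure ((insert x T : Finset Q) : Set Q)) := by
        rw [hk]; nlinarith
      have hcard : (insert x T : Finset Q).card ≤ T.card + 1 := Finset.card_insert_le _ _
      have hpow : 2 ^ (insert x T : Finset Q).card ≤ 2 ^ (T.card + 1) :=
        Nat.pow_le_pow_right (by norm_num) hcard
      refine ih (insert x T) ?_ ?_
      · rw [pow_succ] at hpow; omega
      · omega
  refine key _ ∅ ?_ le_rfl
  simp

lemma aux_inter_gen {A : Type*} [AddCommGroup A] (F : Finset A) (P : Submodule ℤ A) :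
    ∃ R : Finset A, R.card ≤ F.card ∧
      Submodule.span ℤ (R : Set A) = Submodule.span ℤ (F : Set A) ⊓ P := by
  classical
  let φ : (F → ℤ) →ₗ[ℤ] A := Fintype.linearCombination ℤ (fun x : F => (x : A))
  let M : Submodule ℤ (F → ℤ) := P.comap φ
  have hr : LinearMap.range φ = Submodule.span ℤ (F : Set A) := by
    rw [Fintype.range_linearCombination]; simp
  have hfr : Module.finrank ℤ M ≤ F.card := by
    simpa using Submodule.finrank_le M
  let B := Module.finBasis ℤ M
  refine ⟨Finset.univ.image (fun i => φ (B i : F → ℤ)), ?_, ?_⟩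
  · exact Finset.card_image_le.trans (by simpa using hfr)
  · rw [← hr, ← Submodule.map_comap_eq]
    change _ = Submodule.map φ M
    have h1 : Submodule.map M.subtype (Submodule.span ℤ (Set.range B)) = M := by
      rw [B.span_eq]; simp
    refine Eq.trans ?_ (congrArg (Submodule.map φ) h1)
    rw [Submodule.map_span, Submodule.map_span]
    congr 1
    ext; simp

lemma aux_main {A : Type*} [Ring A] (G : Finset A)
    (hG : ∀ P : AddSubgroup A, (1 : A) ∈ P → (∀ g ∈ G, ∀ x ∈ P, g * x ∈ P) → P = ⊤)
    (N₀ : Submodule A A) [Finite (A ⧸ N₀)] :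
    ∃ (T : Finset A) (s : ℕ), Submodule.span A (T : Set A) = N₀ ∧
      T.card ≤ 1 + s + G.card * s ∧ 2 ^ s ≤ Nat.card (A ⧸ N₀) := by
  classical
  obtain ⟨T, hT, hTc⟩ := aux_small_gen (A ⧸ N₀)
  let F : Finset A := T.image Quotient.out
  have hFc : F.card ≤ T.card := Finset.card_image_le
  let K : Submodule ℤ A := Submodule.span ℤ (F : Set A)
  have hK : ∀ a : A, ∃ e ∈ K, a - e ∈ N₀ := by
    intro a
    have : (N₀.mkQ a) ∈ AddSubgroup.closure (T : Set (A ⧸ N₀)) := by rw [hT]; trivial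
    have h2 : AddSubgroup.closure (T : Set (A ⧸ N₀)) ≤
        AddSubgroup.map N₀.mkQ.toAddMonoidHom K.toAddSubgroup := by
      rw [AddSubgroup.closure_le]
      intro t ht
      refine ⟨Quotient.out t, Submodule.subset_span ?_, ?_⟩
      · exact Finset.mem_coe.2 (Finset.mem_image_of_mem _ ht)
      · exact Quotient.out_eq t
    obtain ⟨e, he, hea⟩ := h2 this
    refine ⟨e, he, ?_⟩
    rw [← Submodule.Quotient.eq]
    exact hea.symm
  choose ε hεK hεN using hK
  obtain ⟨R, hRc, hR⟩ := aux_inter_gen F (N₀.restrictScalars ℤ)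
  let E : Finset A := (G ×ˢ F).image (fun p => p.1 * p.2 - ε (p.1 * p.2))
  let U : Finset A := ({1 - ε 1} ∪ R) ∪ E
  have hRN : ∀ r ∈ R, r ∈ N₀ := by
    intro r hr
    have : r ∈ Submodule.span ℤ (R : Set A) := Submodule.subset_span hr
    rw [hR] at this
    exact this.2
  have hUN : Submodule.span A (U : Set A) ≤ N₀ := by
    rw [Submodule.span_le]
    intro u hu
    simp only [U, E, Finset.coe_union, Set.mem_union, Finset.mem_coe, Finset.mem_singleton,
      Finset.mem_image] at hu
    rcases hu with (rfl | hu) | ⟨p, -, rfl⟩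
    · exact hεN 1
    · exact hRN _ hu
    · exact hεN _
  let L : Submodule A A := Submodule.span A (U : Set A)
  have hUL : ∀ u ∈ U, u ∈ L := fun u hu => Submodule.subset_span hu
  have htop : (K ⊔ L.restrictScalars ℤ).toAddSubgroup = ⊤ := by
    apply hG
    · have h1 : (1 : A) = ε 1 + (1 - ε 1) := by abel
      change (1 : A) ∈ K ⊔ L.restrictScalars ℤ
      rw [h1]
      exact Submodule.add_mem_sup (hεK 1) (hUL _ (by simp [U]))
    · intro g hg x hx
      change g * x ∈ K ⊔ L.restrictScalars ℤ
      change x ∈ K ⊔ L.restrictScalars ℤ at hx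
      obtain ⟨k, hk, l, hl, rfl⟩ := Submodule.mem_sup.1 hx
      rw [mul_add]
      refine add_mem ?_ (Submodule.mem_sup_right (L.smul_mem g hl))
      have : K ≤ (K ⊔ L.restrictScalars ℤ).comap (LinearMap.mulLeft ℤ g) := by
        rw [Submodule.span_le]
        intro f hf
        change g * f ∈ K ⊔ L.restrictScalars ℤ
        have h1 : g * f = ε (g * f) + (g * f - ε (g * f)) := by abel
        rw [h1]
        refine Submodule.add_mem_sup (hεK _) (hUL _ ?_)
        refine Finset.mem_union_right _ (Finset.mem_image.2 ⟨(g, f), ?_, rfl⟩)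
        exact Finset.mem_product.2 ⟨hg, hf⟩
      exact this hk
  refine ⟨U, T.card, le_antisymm hUN ?_, ?_, hTc⟩
  · intro x hx
    have hx' : x ∈ K ⊔ L.restrictScalars ℤ := by
      change x ∈ (K ⊔ L.restrictScalars ℤ).toAddSubgroup
      rw [htop]; trivial
    obtain ⟨k, hk, l, hl, rfl⟩ := Submodule.mem_sup.1 hx'
    have hkN : k ∈ N₀ := by
      have := N₀.sub_mem hx (hUN hl)
      simpa using this
    have hkR : k ∈ Submodule.span ℤ (R : Set A) := by rw [hR]; exact ⟨hk, hkN⟩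
    have hRL : Submodule.span ℤ (R : Set A) ≤ L.restrictScalars ℤ := by
      rw [Submodule.span_le]
      intro r hr
      exact hUL r (Finset.mem_union_left _ (Finset.mem_union_right _ hr))
    exact L.add_mem (hRL hkR) hl
  · have h1 : U.card ≤ ({1 - ε 1} ∪ R : Finset A).card + E.card := Finset.card_union_le _ _
    have h2 : ({1 - ε 1} ∪ R : Finset A).card ≤ 1 + R.card :=
      (Finset.card_union_le _ _).trans (by simp)
    have h3 : E.card ≤ G.card * F.card := Finset.card_image_le.trans (by simp)
    have h4 : G.card * F.card ≤ G.card * T.card := Nat.mul_le_mul_left _ hFc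
    omega

/-- Let `Γ` be a group generated by `d` elements and `N = ℤΓ` the regular module.
If `N₀ ≤ ℤΓ` is a submodule of finite (additive) index `b`, then `N₀` is generated
as a `ℤΓ`-module by at most `1 + (2d+1)·log₂ b` elements. -/
theorem principal_submodule_generation_bound {Γ : Type*} [Group Γ] (dn : ℕ)
    (hΓ : ∃ S : Finset Γ, S.card = dn ∧ Subgroup.closure (S : Set Γ) = ⊤)
    (N₀ : Submodule (MonoidAlgebra ℤ Γ) (MonoidAlgebra ℤ Γ)) (b : ℕ) (hb : 0 < b)
    (hidx : Nat.card (MonoidAlgebra ℤ Γ ⧸ N₀) = b) :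
    ∃ T₀ : Finset (MonoidAlgebra ℤ Γ),
      Submodule.span (MonoidAlgebra ℤ Γ) (T₀ : Set (MonoidAlgebra ℤ Γ)) = N₀ ∧
      (T₀.card : ℝ) ≤ 1 + (2 * dn + 1) * Real.logb 2 b := by
  classical
  obtain ⟨S, hS, hcl⟩ := hΓ
  have : Finite (MonoidAlgebra ℤ Γ ⧸ N₀) := Nat.finite_of_card_ne_zero (by omega)
  let G : Finset (MonoidAlgebra ℤ Γ) :=
    S.image (fun g => MonoidAlgebra.of ℤ Γ g) ∪ S.image (fun g => MonoidAlgebra.of ℤ Γ g⁻¹)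
  have hGc : G.card ≤ 2 * dn := by
    have h1 := Finset.card_union_le (S.image (fun g => MonoidAlgebra.of ℤ Γ g))
      (S.image (fun g => MonoidAlgebra.of ℤ Γ g⁻¹))
    have h2 : (S.image (fun g => MonoidAlgebra.of ℤ Γ g)).card ≤ S.card := Finset.card_image_le
    have h3 : (S.image (fun g => MonoidAlgebra.of ℤ Γ g⁻¹)).card ≤ S.card :=
      Finset.card_image_le
    change (_ ∪ _ : Finset _).card ≤ _
    omega
  have hG : ∀ P : AddSubgroup (MonoidAlgebra ℤ Γ), (1 : MonoidAlgebra ℤ Γ) ∈ P →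
      (∀ g ∈ G, ∀ x ∈ P, g * x ∈ P) → P = ⊤ := by
    intro P h1 hP
    have hmul : ∀ g : Γ, ∀ x ∈ P, MonoidAlgebra.of ℤ Γ g * x ∈ P := by
      intro g
      have hg : g ∈ Subgroup.closure (S : Set Γ) := by rw [hcl]; trivial
      induction hg using Subgroup.closure_induction'' with
      | mem x hx =>
        exact hP _ (Finset.mem_union_left _ (Finset.mem_image_of_mem _ hx))
      | inv_mem x hx =>
        exact hP _ (Finset.mem_union_right _
          (Finset.mem_image_of_mem (fun g => MonoidAlgebra.of ℤ Γ g⁻¹) hx))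
      | one => intro x hx; simpa [map_one] using hx
      | mul x y _ _ hx hy =>
        intro z hz
        rw [map_mul, mul_assoc]
        exact hx _ (hy _ hz)
    rw [eq_top_iff]
    intro a _
    induction a using MonoidAlgebra.induction_on with
    | of g => simpa using hmul g 1 h1
    | add x y hx hy => exact P.add_mem (hx trivial) (hy trivial)
    | smul n x hx =>
      have := P.zsmul_mem (hx trivial) n
      convert this using 1
  obtain ⟨T, s, hT, hTc, hs⟩ := aux_main G hG N₀
  refine ⟨T, hT, ?_⟩
  rw [hidx] at hs
  have hlog : (s : ℝ) ≤ Real.logb 2 b := by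
    rw [Real.le_logb_iff_rpow_le (by norm_num) (by exact_mod_cast hb), Real.rpow_natCast]
    exact_mod_cast hs
  have h5 : T.card ≤ 1 + (2 * dn + 1) * s := by
    have := Nat.mul_le_mul_right s hGc
    nlinarith
  have h6 : (T.card : ℝ) ≤ 1 + (2 * dn + 1) * s := by exact_mod_cast h5
  refine h6.trans ?_
  gcongr
end

section
/- Let G₁ and G₂ be finitely generated groups, Γ = G₁ * G₂ their free product, and N a normal subgroup of finite index n in Γ. Let N₁ = N ∩ G₁, N₂ = N ∩ G₂, k₁ = [G₁ : N₁], k₂ = [G₂ : N₂]. Then (d(N)-1)/n = (d(N₁)-1)/k₁ + (d(N₂)-1)/k₂ + 1. -/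
/-- `d G` is the minimal number of generators of the group `G`. -/
noncomputable def d (G : Type*) [Group G] : ℕ :=
  sInf {n | ∃ S : Finset G, S.card = n ∧ Subgroup.closure (S : Set G) = ⊤}

namespace GrushkoAux

/-- The groupoid on `V` generated by a list of arrows labelled by elements of `G`. -/
inductive Gen {V G : Type*} [Group G] (S : List (V × V × G)) : V → V → G → Prop
  | of {x y : V} {g : G} (h : (x, y, g) ∈ S) : Gen S x y g
  | one (x : V) : Gen S x x 1
  | mul {x y z : V} {g h : G} (a : Gen S x y g) (b : Gen S y z h) : Gen S x z (g * h)
  | inv {x y : V} {g : G} (a : Gen S x y g) : Gen S y x g⁻¹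

theorem Gen.bind {V W G K : Type*} [Group G] [Group K] {S : List (V × V × G)}
    {T : List (W × W × K)} (f : V → W) (φ : G →* K)
    (h : ∀ x y g, (x, y, g) ∈ S → Gen T (f x) (f y) (φ g)) {x y : V} {g : G}
    (a : Gen S x y g) : Gen T (f x) (f y) (φ g) := by
  induction a with
  | of h' => exact h _ _ _ h'
  | one x => rw [map_one]; exact Gen.one _
  | mul _ _ iha ihb => rw [map_mul]; exact iha.mul ihb
  | inv _ ih => rw [map_inv]; exact ih.inv

theorem Gen.mono {V G : Type*} [Group G] {S T : List (V × V × G)} (h : S ⊆ T)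
    {x y : V} {g : G} (a : Gen S x y g) : Gen T x y g :=
  Gen.bind (T := T) id (MonoidHom.id G) (fun _ _ _ h' => Gen.of (h h')) a

theorem Gen.valid {V G Q : Type*} [Group G] [Group Q] {S : List (V × V × G)} (p : V → Q)
    (ψ : G →* Q) (h : ∀ x y g, (x, y, g) ∈ S → p y = p x * ψ g) {x y : V} {g : G}
    (a : Gen S x y g) : p y = p x * ψ g := by
  induction a with
  | of h' => exact h _ _ _ h'
  | one x => simp
  | mul _ _ iha ihb => rw [ihb, iha, map_mul, mul_assoc]
  | inv _ ih => rw [ih]; simp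

/-- `S` generates the action groupoid pulled back along `p`. -/
def Full {V G Q : Type*} [Group G] [Group Q] (p : V → Q) (ψ : G →* Q)
    (S : List (V × V × G)) : Prop :=
  ∀ x y g, Gen S x y g ↔ p y = p x * ψ g

theorem exists_edge {V G : Type*} [Group G] {S : List (V × V × G)} {v w : V} {g : G}
    (hvw : v ≠ w) (h : Gen S v w g) :
    ∃ u c, u ≠ w ∧ ((u, w, c) ∈ S ∨ (w, u, c) ∈ S) := by
  by_contra hcon
  push Not at hcon
  have key : ∀ x y g, Gen S x y g → (x = w ↔ y = w) := by
    intro x y g a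
    induction a with
    | @of x y g h' =>
      constructor
      · rintro rfl
        by_contra hy
        exact (hcon y g hy).2 h'
      · rintro rfl
        by_contra hy
        exact (hcon x g hy).1 h'
    | one x => rfl
    | mul _ _ iha ihb => exact iha.trans ihb
    | inv _ ih => exact ih.symm
  exact hvw ((key _ _ _ h).2 rfl)

theorem elim_aux {V G : Type*} [Group G] {S L : List (V × V × G)} {u w : V} (huw : u ≠ w)
    (c : G) (e : V × V × G) (hS : ∀ t, t ∈ S ↔ t = e ∨ t ∈ L)
    (he : e = (u, w, c) ∨ e = (w, u, c⁻¹)) :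
    ∃ S' : List ({x // x ≠ w} × {x // x ≠ w} × G), S'.length = L.length ∧
      ∀ x y g, Gen S' x y g ↔ Gen S x.1 y.1 g := by
  classical
  let r : V → {x // x ≠ w} := fun x => if h : x = w then ⟨u, huw⟩ else ⟨x, h⟩
  let τ : V → G := fun x => if x = w then c else 1
  have rw' : r w = ⟨u, huw⟩ := by simp [r]
  have τw : τ w = c := by simp [τ]
  have rx : ∀ x (h : x ≠ w), r x = ⟨x, h⟩ := fun x h => by simp [r, h]
  have τx : ∀ x (h : x ≠ w), τ x = 1 := fun x h => by simp [τ, h]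
  have heS : Gen S u w c := by
    rcases he with he | he
    · exact Gen.of ((hS _).2 (Or.inl he.symm))
    · have : Gen S w u c⁻¹ := Gen.of ((hS _).2 (Or.inl he.symm))
      simpa using this.inv
  have hr : ∀ x, Gen S (r x).1 x (τ x) := by
    intro x
    by_cases h : x = w
    · subst h; rw [rw', τw]; exact heS
    · rw [rx x h, τx x h]; exact Gen.one _
  let S' := L.map (fun t => (r t.1, r t.2.1, τ t.1 * t.2.2 * (τ t.2.1)⁻¹))
  have h1 : ∀ x y g, Gen S' x y g → Gen S x.1 y.1 g := by
    intro x y g a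
    refine Gen.bind (T := S) Subtype.val (MonoidHom.id G) ?_ a
    intro x y g h
    simp only [S', List.mem_map, Prod.mk.injEq] at h
    obtain ⟨⟨x', y', g'⟩, hm, rfl, rfl, rfl⟩ := h
    exact ((hr x').mul (Gen.of ((hS _).2 (Or.inr hm)))).mul (hr y').inv
  have h2 : ∀ x y g, Gen S x y g → Gen S' (r x) (r y) (τ x * g * (τ y)⁻¹) := by
    intro x y g a
    induction a with
    | @of x y g h =>
      rcases (hS _).1 h with h | h
      · rcases he with he | he
        · rw [he] at h
          simp only [Prod.mk.injEq] at h
          obtain ⟨rfl, rfl, rfl⟩ := h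
          rw [rw', τw, rx _ huw, τx _ huw]
          simpa using Gen.one _
        · rw [he] at h
          simp only [Prod.mk.injEq] at h
          obtain ⟨rfl, rfl, rfl⟩ := h
          rw [rw', τw, rx _ huw, τx _ huw]
          simpa using Gen.one _
      · exact Gen.of (List.mem_map.2 ⟨_, h, rfl⟩)
    | one x => simpa using Gen.one _
    | mul _ _ iha ihb => simpa [mul_assoc] using iha.mul ihb
    | inv _ ih => simpa [mul_assoc] using ih.inv
  refine ⟨S', by simp [S'], fun x y g => ⟨h1 x y g, fun a => ?_⟩⟩
  have := h2 _ _ _ a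
  rw [rx _ x.2, rx _ y.2, τx _ x.2, τx _ y.2] at this
  simpa using this

theorem elim_vertex {V G : Type*} [Group G] (S : List (V × V × G)) {v w : V} {g : G}
    (hvw : v ≠ w) (h : Gen S v w g) :
    ∃ S' : List ({x // x ≠ w} × {x // x ≠ w} × G), S'.length + 1 = S.length ∧
      ∀ x y g, Gen S' x y g ↔ Gen S x.1 y.1 g := by
  obtain ⟨u, c0, huw, he0⟩ := exists_edge hvw h
  have : ∃ (c : G) (e : V × V × G), e ∈ S ∧ (e = (u, w, c) ∨ e = (w, u, c⁻¹)) := by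
    rcases he0 with he | he
    · exact ⟨c0, _, he, Or.inl rfl⟩
    · exact ⟨c0⁻¹, _, he, Or.inr (by simp)⟩
  obtain ⟨c, e, heS, he⟩ := this
  obtain ⟨l1, l2, rfl⟩ := List.append_of_mem heS
  obtain ⟨S', hl, hS'⟩ := elim_aux (S := l1 ++ e :: l2) (L := l1 ++ l2) huw c e
    (fun t => by simp only [List.mem_append, List.mem_cons]; tauto) he
  exact ⟨S', by rw [hl]; simp; omega, hS'⟩

/-! ### Minimal number of generators -/

theorem d_le_of_list {G : Type*} [Group G] (H : Subgroup G) (L : List G)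
    (h : Subgroup.closure {x | x ∈ L} = H) : d H ≤ L.length := by
  classical
  have hL : ∀ x ∈ L, x ∈ H := fun x hx => h ▸ Subgroup.subset_closure hx
  let T : Finset H := (L.attach.map fun x => (⟨x.1, hL x.1 x.2⟩ : H)).toFinset
  have hT : T.card ≤ L.length := (List.toFinset_card_le _).trans (by simp)
  refine le_trans (Nat.sInf_le ⟨T, rfl, ?_⟩) hT
  have himg : H.subtype '' (T : Set H) = {x | x ∈ L} := by
    ext x
    simp only [T, Set.mem_image, Finset.mem_coe, List.mem_toFinset, List.mem_map, List.mem_attach,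
      true_and, Subtype.exists, Set.mem_ofPred_eq]
    constructor
    · rintro ⟨a, ha, ⟨b, hb, hab⟩, rfl⟩
      simp only [Subtype.mk.injEq] at hab
      subst hab
      exact hb
    · intro hx
      exact ⟨x, hL x hx, ⟨x, hx, rfl⟩, rfl⟩
  apply Subgroup.map_injective H.subtype_injective
  rw [MonoidHom.map_closure, himg, h, ← MonoidHom.range_eq_map, Subgroup.range_subtype]

theorem exists_list_d {G : Type*} [Group G] (H : Subgroup G) (hH : H.FG) :
    ∃ L : List G, L.length = d H ∧ Subgroup.closure {x | x ∈ L} = H := by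
  classical
  have hne : {n | ∃ S : Finset H, S.card = n ∧ Subgroup.closure (S : Set H) = ⊤}.Nonempty := by
    have := (Group.fg_iff_subgroup_fg H).2 hH
    obtain ⟨S, hS⟩ := Group.FG.out (G := H)
    exact ⟨_, S, rfl, hS⟩
  obtain ⟨S, hc, hS⟩ := Nat.sInf_mem hne
  refine ⟨S.toList.map H.subtype, by rw [List.length_map, Finset.length_toList, hc]; rfl, ?_⟩
  have : {x | x ∈ S.toList.map H.subtype} = H.subtype '' (S : Set H) := by
    ext x; simp
  rw [this, ← MonoidHom.map_closure, hS, ← MonoidHom.range_eq_map, Subgroup.range_subtype]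

theorem sum_filter_length {V α : Type*} [Fintype V] [DecidableEq V] (f : α → V) (L : List α) :
    ∑ v, (L.filter (fun t => f t = v)).length = L.length := by
  induction L with
  | nil => simp
  | cons a L ih =>
    simp only [List.filter_cons, List.length_cons]
    rw [← ih]
    have : ∀ v, (if decide (f a = v) = true then a :: L.filter (fun t => f t = v)
      else L.filter (fun t => f t = v)).length =
        (L.filter (fun t => f t = v)).length + if f a = v then 1 else 0 := by
      intro v; split_ifs <;> simp_all
    rw [Finset.sum_congr rfl (fun v _ => this v), Finset.sum_add_distrib]
    simp

theorem lower_bound {G Q : Type*} [Group G] [Group Q] (ψ : G →* Q) [Fintype (Q ⧸ ψ.range)]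
    (m : ℕ) : ∀ {V : Type*} [Fintype V] (_ : Fintype.card V = m) (p : V → Q)
    (S : List (V × V × G)) (_ : Full p ψ S)
    (_ : Function.Surjective (fun v => (p v : Q ⧸ ψ.range))),
    Fintype.card V + Fintype.card (Q ⧸ ψ.range) * d ψ.ker ≤
      S.length + Fintype.card (Q ⧸ ψ.range) := by
  classical
  induction m with
  | zero =>
    intro V _ hV p S hS hp
    have : IsEmpty V := Fintype.card_eq_zero_iff.1 hV
    have := (hp ((1 : Q) : Q ⧸ ψ.range)).choose
    exact isEmptyElim this
  | succ m ih =>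
    intro V _ hV p S hS hp
    by_cases hinj : Function.Injective (fun v => (p v : Q ⧸ ψ.range))
    · have hcard := Fintype.card_of_bijective ⟨hinj, hp⟩
      have hloop : ∀ x y g, Gen S x y g → x = y := by
        intro x y g h
        apply hinj
        have := (hS _ _ _).1 h
        simp [this]
      have hd : ∀ v, d ψ.ker ≤ (S.filter (fun t => t.1 = v)).length := by
        intro v
        rw [← List.length_map (f := fun t : V × V × G => t.2.2)]
        apply d_le_of_list
        apply le_antisymm
        · rw [Subgroup.closure_le]
          intro g hg
          simp only [List.mem_map, List.mem_filter, Set.mem_ofPred_eq, decide_eq_true_eq] at hg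
          obtain ⟨⟨x, y, g⟩, ⟨hm, rfl⟩, rfl⟩ := hg
          have h1 : Gen S x y g := Gen.of hm
          have := hloop _ _ _ h1
          subst this
          simpa [MonoidHom.mem_ker] using (hS _ _ _).1 h1
        · intro g hg
          have h1 : Gen S v v g := (hS _ _ _).2 (by simp [(MonoidHom.mem_ker).1 hg])
          have key : ∀ x y g, Gen S x y g → x = v → g ∈ Subgroup.closure
              {x | x ∈ (S.filter (fun t => t.1 = v)).map (fun t : V × V × G => t.2.2)} := by
            intro x y g h
            induction h with
            | @of x y g h =>
              rintro rfl
              apply Subgroup.subset_closure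
              simp only [List.mem_map, List.mem_filter, Set.mem_ofPred_eq, decide_eq_true_eq]
              exact ⟨_, ⟨h, rfl⟩, rfl⟩
            | one x => intro _; exact one_mem _
            | mul a b iha ihb =>
              intro h
              exact mul_mem (iha h) (ihb ((hloop _ _ _ a).symm.trans h))
            | inv a ih =>
              intro h
              exact inv_mem (ih ((hloop _ _ _ a).trans h))
          exact key _ _ _ h1 rfl
      have := Finset.sum_le_sum (fun v (_ : v ∈ Finset.univ) => hd v)
      rw [sum_filter_length] at this
      simp only [Finset.sum_const, Finset.card_univ, smul_eq_mul] at this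
      rw [← hcard]
      omega
    · simp only [Function.Injective] at hinj
      push Not at hinj
      obtain ⟨v, w, hvw, hne⟩ := hinj
      obtain ⟨g, hg⟩ := (QuotientGroup.eq).1 hvw
      have hgen : Gen S v w g := (hS _ _ _).2 (by rw [hg]; simp)
      obtain ⟨S', hl, hS'⟩ := elim_vertex S hne hgen
      have hc : Fintype.card {x // x ≠ w} = m := by
        rw [Fintype.card_subtype_compl]; simp [hV]
      have := ih (V := {x // x ≠ w}) hc (fun x => p x.1) S'
        (fun x y g => (hS' x y g).trans (hS _ _ _)) (by
          intro c
          obtain ⟨x, hx⟩ := hp c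
          by_cases hxw : x = w
          · exact ⟨⟨v, hne⟩, by rw [← hx, hxw]; exact hvw⟩
          · exact ⟨⟨x, hxw⟩, hx⟩)
      omega

theorem upper_bound {G Q : Type*} [Group G] [Group Q] [Fintype Q] (ψ : G →* Q)
    [Fintype (Q ⧸ ψ.range)] (hH : ψ.ker.FG) :
    ∃ S : List (Q × Q × G), Full id ψ S ∧
      S.length + Fintype.card (Q ⧸ ψ.range) =
        Fintype.card Q + Fintype.card (Q ⧸ ψ.range) * d ψ.ker := by
  classical
  obtain ⟨L, hL, hcl⟩ := exists_list_d _ hH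
  let r : Q → Q := fun x => (x : Q ⧸ ψ.range).out
  have hr : ∀ x, ∃ g, x = r x * ψ g := by
    intro x
    have : ((r x : Q) : Q ⧸ ψ.range) = x := QuotientGroup.out_eq' _
    obtain ⟨g, hg⟩ := QuotientGroup.eq.1 this
    exact ⟨g, by rw [hg]; simp⟩
  choose e he using hr
  let N : Finset Q := Finset.univ.filter (fun x => r x ≠ x)
  let R : Finset Q := Finset.univ.filter (fun x => ¬ (r x ≠ x))
  have hR : R.card = Fintype.card (Q ⧸ ψ.range) := by
    rw [← Finset.card_univ]
    refine Finset.card_bij (fun x _ => (x : Q ⧸ ψ.range)) (by simp) ?_ ?_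
    · intro a ha b hb hab
      simp only [R, Finset.mem_filter, Finset.mem_univ, true_and, not_not] at ha hb
      rw [← ha, ← hb]; simp only [r, hab]
    · intro c _
      refine ⟨c.out, ?_, by simp⟩
      simp [R, r]
  have hNR : N.card + R.card = Fintype.card Q :=
    Finset.card_filter_add_card_filter_not _
  let S1 : List (Q × Q × G) := N.toList.map (fun x => (r x, x, e x))
  let S2 : List (Q × Q × G) := (R.toList ×ˢ L).map (fun t => (t.1, t.1, t.2))
  have hval : ∀ x y g, (x, y, g) ∈ S1 ++ S2 → y = x * ψ g := by
    intro x y g h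
    simp only [S1, S2, List.mem_append, List.mem_map, Prod.mk.injEq, Prod.exists] at h
    rcases h with ⟨a, _, rfl, rfl, rfl⟩ | ⟨a, b, hab, rfl, rfl, rfl⟩
    · exact he a
    · have hb : b ∈ ψ.ker := by
        rw [← hcl]; exact Subgroup.subset_closure (List.mem_product.1 hab).2
      simp [(MonoidHom.mem_ker).1 hb]
  have hrr : ∀ x, r (r x) = r x := by intro x; simp [r]
  have hker : ∀ x, ∀ g ∈ ψ.ker, Gen (S1 ++ S2) (r x) (r x) g := by
    intro x g hg
    rw [← hcl] at hg
    induction hg using Subgroup.closure_induction with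
    | mem g hg =>
      refine Gen.of (List.mem_append.2 (Or.inr (List.mem_map.2 ⟨(r x, g), ?_, rfl⟩)))
      exact List.mem_product.2 ⟨by simp [R, hrr], hg⟩
    | one => exact Gen.one _
    | mul _ _ _ _ ha hb => exact ha.mul hb
    | inv _ _ ha => exact ha.inv
  have hstar : ∀ x, ∃ g, x = r x * ψ g ∧ Gen (S1 ++ S2) (r x) x g := by
    intro x
    by_cases h : r x = x
    · exact ⟨1, by simp [h], by rw [h]; exact Gen.one _⟩
    · exact ⟨e x, he x, Gen.of (List.mem_append.2 (Or.inl (List.mem_map.2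
        ⟨x, by simp [N, h], rfl⟩)))⟩
  refine ⟨S1 ++ S2, ?_, ?_⟩
  · intro x y g
    refine ⟨fun h => Gen.valid id ψ hval h, fun h => ?_⟩
    simp only [id] at h
    obtain ⟨a, hxa, ha⟩ := hstar x
    obtain ⟨b, hyb, hb⟩ := hstar y
    have hxy : r x = r y := by
      simp only [r]; congr 1; rw [QuotientGroup.eq]; exact ⟨g, by rw [h]; simp⟩
    have hk : a * g * b⁻¹ ∈ ψ.ker := by
      rw [MonoidHom.mem_ker, map_mul, map_mul, map_inv, mul_inv_eq_one]
      apply mul_left_cancel (a := r x)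
      rw [← mul_assoc, ← hxa, ← h, hxy, ← hyb]
    have h3 := (ha.inv.mul (hker x _ hk)).mul (hxy ▸ hb)
    simpa [mul_assoc] using h3
  · have : S1.length + S2.length = N.card + R.card * L.length := by
      simp [S1, S2, List.length_product]
    rw [List.length_append, this, ← hL, ← hNR, hR]; omega

end GrushkoAux

namespace GrushkoAux

open Monoid.Coprod

/-- Relabel arrows along a homomorphism. -/
def relabel {V G K : Type*} [Group G] [Group K] (φ : G →* K) (S : List (V × V × G)) :
    List (V × V × K) := S.map (fun t => (t.1, t.2.1, φ t.2.2))

/-- Push arrows along a map of vertices. -/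
def push {V W G : Type*} (f : V → W) (S : List (V × V × G)) :
    List (W × W × G) := S.map (fun t => (f t.1, f t.2.1, t.2.2))

theorem mem_relabel {V G K : Type*} [Group G] [Group K] {φ : G →* K} {S : List (V × V × G)}
    {x y : V} {k : K} : (x, y, k) ∈ relabel φ S ↔ ∃ g, (x, y, g) ∈ S ∧ φ g = k := by
  simp only [relabel, List.mem_map, Prod.mk.injEq, Prod.exists]
  constructor
  · rintro ⟨a, b, g, h, rfl, rfl, rfl⟩; exact ⟨g, h, rfl⟩
  · rintro ⟨g, h, rfl⟩; exact ⟨x, y, g, h, rfl, rfl, rfl⟩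

theorem mem_push {V W G : Type*} {f : V → W} {S : List (V × V × G)}
    {x y : W} {g : G} : (x, y, g) ∈ push f S ↔ ∃ a b, (a, b, g) ∈ S ∧ f a = x ∧ f b = y := by
  simp only [push, List.mem_map, Prod.mk.injEq, Prod.exists]
  constructor
  · rintro ⟨a, b, g, h, rfl, rfl, rfl⟩; exact ⟨a, b, h, rfl, rfl⟩
  · rintro ⟨a, b, h, rfl, rfl⟩; exact ⟨a, b, g, h, rfl, rfl, rfl⟩

theorem Gen.relabel {V G K : Type*} [Group G] [Group K] (φ : G →* K) {S : List (V × V × G)}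
    {x y : V} {g : G} (h : Gen S x y g) : Gen (relabel φ S) x y (φ g) :=
  Gen.bind (T := GrushkoAux.relabel φ S) id φ
    (fun _ _ g h => Gen.of (mem_relabel.2 ⟨g, h, rfl⟩)) h

theorem Full.congr {V G Q : Type*} [Group G] [Group Q] {p : V → Q} {ψ : G →* Q}
    {S T : List (V × V × G)} (h : Full p ψ S) (hST : ∀ t, t ∈ S ↔ t ∈ T) : Full p ψ T :=
  fun x y g => Iff.trans
    ⟨fun a => a.mono (fun t ht => (hST t).2 ht), fun a => a.mono (fun t ht => (hST t).1 ht)⟩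
    (h x y g)

theorem fold {G₁ G₂ Γ Q V : Type*} [Group G₁] [Group G₂] [Group Γ] [Group Q]
    (i₁ : G₁ →* Γ) (i₂ : G₂ →* Γ) (ψ : Γ →* Q) (p : V → Q)
    (SA : List (V × V × G₁)) (SB : List (V × V × G₂))
    (hfull : Full p ψ (relabel i₁ SA ++ relabel i₂ SB)) (hp : Function.Surjective p)
    {v w : V} (hvw : v ≠ w) (h : Gen SA v w 1) :
    ∃ (SA' : List ({x // x ≠ w} × {x // x ≠ w} × G₁))
      (SB' : List ({x // x ≠ w} × {x // x ≠ w} × G₂)),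
      SA'.length + 1 = SA.length ∧ SB'.length = SB.length ∧
      Full (fun x => p x.1) ψ (relabel i₁ SA' ++ relabel i₂ SB') ∧
      Function.Surjective (fun x : {x // x ≠ w} => p x.1) := by
  classical
  obtain ⟨SA', hl, hSA'⟩ := elim_vertex SA hvw h
  let f : V → {x // x ≠ w} := fun x => if hx : x = w then ⟨v, hvw⟩ else ⟨x, hx⟩
  have fx : ∀ x (hx : x ≠ w), f x = ⟨x, hx⟩ := fun x hx => by simp [f, hx]
  have hf : ∀ x, Gen SA (f x).1 x 1 := by
    intro x
    by_cases hx : x = w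
    · subst hx; simpa [f] using h
    · rw [fx x hx]; exact Gen.one _
  have hpA : ∀ x y a, Gen SA x y a → p y = p x * ψ (i₁ a) := by
    intro x y a ha
    exact (hfull _ _ _).1 ((ha.relabel i₁).mono (by simp))
  have hpf : ∀ x, p (f x).1 = p x := by
    intro x; simpa using (hpA _ _ _ (hf x)).symm
  have hpB : ∀ x y a, (x, y, a) ∈ SB → p y = p x * ψ (i₂ a) := by
    intro x y a ha
    exact (hfull _ _ _).1 (((Gen.of ha).relabel i₂).mono (by simp))
  refine ⟨SA', push f SB, hl, by simp [push], ?_, ?_⟩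
  · intro x y g
    constructor
    · refine Gen.valid (fun x : {x // x ≠ w} => p x.1) ψ ?_
      intro x y g hm
      rcases List.mem_append.1 hm with hm | hm
      · obtain ⟨a, ha, rfl⟩ := mem_relabel.1 hm
        exact hpA _ _ _ ((hSA' _ _ _).1 (Gen.of ha))
      · obtain ⟨b, hb, rfl⟩ := mem_relabel.1 hm
        obtain ⟨x', y', hm', rfl, rfl⟩ := mem_push.1 hb
        simpa [hpf] using hpB _ _ _ hm'
    · intro hxy
      have h1 := (hfull x.1 y.1 g).2 hxy
      have h2 := Gen.bind (T := relabel i₁ SA' ++ relabel i₂ (push f SB)) f (MonoidHom.id Γ) ?_ h1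
      · rw [fx _ x.2, fx _ y.2] at h2
        exact h2
      · intro x y g hm
        rcases List.mem_append.1 hm with hm | hm
        · obtain ⟨a, ha, rfl⟩ := mem_relabel.1 hm
          have h3 : Gen SA (f x).1 (f y).1 a := by
            simpa using ((hf x).mul (Gen.of ha)).mul (hf y).inv
          exact (((hSA' _ _ _).2 h3).relabel i₁).mono (by simp)
        · obtain ⟨b, hb, rfl⟩ := mem_relabel.1 hm
          have h3 : Gen (push f SB) (f x) (f y) b := Gen.of (mem_push.2 ⟨_, _, hb, rfl, rfl⟩)
          exact (h3.relabel i₂).mono (by simp)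
  · intro q
    obtain ⟨x, rfl⟩ := hp q
    exact ⟨f x, hpf x⟩

/-- Translation action on subsets of `V × G`. -/
def shift (V G : Type*) [Group G] : G →* Equiv.Perm (Set (V × G)) :=
  MonoidHom.toHomPerm
    { toFun := fun a T => {t | (t.1, t.2 * a) ∈ T}
      map_one' := by
        funext T; ext t
        simp only [mul_one]
        rfl
      map_mul' := by
        intro a b
        funext T; ext t
        simp only [← mul_assoc]
        rfl }

theorem mem_shift {V G : Type*} [Group G] (a : G) (T : Set (V × G)) (t : V × G) :
    t ∈ shift V G a T ↔ (t.1, t.2 * a) ∈ T := Iff.rfl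

/-- The set of arrows ending at `v`. -/
def star {V G : Type*} [Group G] (S : List (V × V × G)) (v : V) : Set (V × G) :=
  {t | Gen S t.1 v t.2}

theorem mem_star {V G : Type*} [Group G] (S : List (V × V × G)) (v : V) (t : V × G) :
    t ∈ star S v ↔ Gen S t.1 v t.2 := Iff.rfl

theorem shift_star {V G : Type*} [Group G] (S : List (V × V × G)) (x y : V) (a : G) :
    shift V G a (star S y) = star S x ↔ Gen S x y a := by
  constructor
  · intro h
    have : (x, (1 : G)) ∈ star S x := Gen.one x
    rw [← h, mem_shift, mem_star] at this
    simpa using this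
  · intro h
    ext t
    rw [mem_shift, mem_star, mem_star]
    constructor
    · intro h'
      simpa using h'.mul h.inv
    · intro h'
      exact h'.mul h

theorem star_injective {V G : Type*} [Group G] (S : List (V × V × G))
    (hS : ∀ x y, Gen S x y 1 → x = y) : Function.Injective (star S) := by
  intro x y h
  apply hS
  rw [← shift_star, map_one]
  exact h.symm

theorem exists_swap {V α β : Type*} (j : V → α) (k : V → β) (hj : Function.Injective j)
    (hk : Function.Injective k) :
    ∃ σ : Equiv.Perm (α ⊕ β), ∀ v, σ (Sum.inr (k v)) = Sum.inl (j v) := by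
  classical
  let f : α ⊕ β → α ⊕ β := fun z => match z with
    | Sum.inl a => if h : ∃ v, j v = a then Sum.inr (k h.choose) else Sum.inl a
    | Sum.inr b => if h : ∃ v, k v = b then Sum.inl (j h.choose) else Sum.inr b
  have f1 : ∀ v, f (Sum.inl (j v)) = Sum.inr (k v) := by
    intro v
    have h : ∃ u, j u = j v := ⟨v, rfl⟩
    have : f (Sum.inl (j v)) = Sum.inr (k h.choose) := dif_pos h
    rw [this, hj h.choose_spec]
  have f2 : ∀ v, f (Sum.inr (k v)) = Sum.inl (j v) := by
    intro v
    have h : ∃ u, k u = k v := ⟨v, rfl⟩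
    have : f (Sum.inr (k v)) = Sum.inl (j h.choose) := dif_pos h
    rw [this, hk h.choose_spec]
  have hf : Function.Involutive f := by
    rintro (a | b)
    · by_cases h : ∃ v, j v = a
      · obtain ⟨v, rfl⟩ := h
        rw [f1, f2]
      · have : f (Sum.inl a) = Sum.inl a := dif_neg h
        rw [this, this]
    · by_cases h : ∃ v, k v = b
      · obtain ⟨v, rfl⟩ := h
        rw [f2, f1]
      · have : f (Sum.inr b) = Sum.inr b := dif_neg h
        rw [this, this]
  exact ⟨hf.toPerm, f2⟩

theorem determ {V G₁ G₂ : Type*} [Group G₁] [Group G₂]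
    (SA : List (V × V × G₁)) (SB : List (V × V × G₂))
    (hA : ∀ x y, Gen SA x y 1 → x = y) (hB : ∀ x y, Gen SB x y 1 → x = y) :
    (∀ x y, Gen (relabel (inl : G₁ →* Monoid.Coprod G₁ G₂) SA ++ relabel inr SB) x y 1 → x = y) ∧
    (∀ x y a, Gen (relabel (inl : G₁ →* Monoid.Coprod G₁ G₂) SA ++ relabel inr SB) x y (inl a) →
      Gen SA x y a) ∧
    (∀ x y b, Gen (relabel (inl : G₁ →* Monoid.Coprod G₁ G₂) SA ++ relabel inr SB) x y (inr b) →
      Gen SB x y b) := by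
  have iA := star_injective SA hA
  have iB := star_injective SB hB
  obtain ⟨σ, hσ⟩ := exists_swap _ _ iA iB
  have hσ' : ∀ v, σ⁻¹ (Sum.inl (star SA v)) = Sum.inr (star SB v) := by
    intro v; rw [← hσ]; simp
  let πA : G₁ →* Equiv.Perm (Set (V × G₁) ⊕ Set (V × G₂)) :=
    (Equiv.Perm.sumCongrHom _ _).comp ((MonoidHom.inl _ _).comp (shift V G₁))
  let πB : G₂ →* Equiv.Perm (Set (V × G₁) ⊕ Set (V × G₂)) :=
    (MulAut.conj σ).toMonoidHom.comp
      ((Equiv.Perm.sumCongrHom _ _).comp ((MonoidHom.inr _ _).comp (shift V G₂)))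
  have hπA : ∀ a T, πA a (Sum.inl T) = Sum.inl (shift V G₁ a T) := fun a T => rfl
  have hπB : ∀ b v, πB b (Sum.inl (star SA v)) = σ (Sum.inr (shift V G₂ b (star SB v))) := by
    intro b v
    have : πB b (Sum.inl (star SA v)) =
      σ ((Equiv.Perm.sumCongrHom _ _ ((1 : Equiv.Perm (Set (V × G₁))), shift V G₂ b))
        (σ⁻¹ (Sum.inl (star SA v)))) := rfl
    rw [this, hσ']
    rfl
  let π := Monoid.Coprod.lift πA πB
  have kA : ∀ x y a, π (inl a) (Sum.inl (star SA y)) = Sum.inl (star SA x) ↔ Gen SA x y a := by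
    intro x y a
    rw [Monoid.Coprod.lift_apply_inl, hπA, Sum.inl.injEq, shift_star]
  have kB : ∀ x y b, π (inr b) (Sum.inl (star SA y)) = Sum.inl (star SA x) ↔ Gen SB x y b := by
    intro x y b
    rw [Monoid.Coprod.lift_apply_inr, hπB, ← hσ, EmbeddingLike.apply_eq_iff_eq, Sum.inr.injEq,
      shift_star]
  have key : ∀ x y g, Gen (relabel (inl : G₁ →* Monoid.Coprod G₁ G₂) SA ++ relabel inr SB) x y g →
      π g (Sum.inl (star SA y)) = Sum.inl (star SA x) := by
    intro x y g h
    induction h with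
    | of hm =>
      rcases List.mem_append.1 hm with hm | hm
      · obtain ⟨a, ha, rfl⟩ := mem_relabel.1 hm
        exact (kA _ _ _).2 (Gen.of ha)
      · obtain ⟨a, ha, rfl⟩ := mem_relabel.1 hm
        exact (kB _ _ _).2 (Gen.of ha)
    | one x => simp
    | mul _ _ iha ihb => rw [map_mul, Equiv.Perm.mul_apply, ihb, iha]
    | inv _ ih => rw [map_inv, Equiv.Perm.inv_eq_iff_eq, ih]
  refine ⟨fun x y h => ?_, fun x y a h => (kA _ _ _).1 (key _ _ _ h),
    fun x y a h => (kB _ _ _).1 (key _ _ _ h)⟩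
  have := key _ _ _ h
  rw [map_one, Equiv.Perm.one_apply, Sum.inl.injEq] at this
  exact (iA this).symm

universe w

theorem fold_all {G₁ G₂ Q : Type*} [Group G₁] [Group G₂] [Group Q] [Fintype Q]
    (ψ : Monoid.Coprod G₁ G₂ →* Q) (m : ℕ) :
    ∀ {V : Type w} [Fintype V] (_ : Fintype.card V = m) (p : V → Q) (_ : Function.Surjective p)
    (SA : List (V × V × G₁)) (SB : List (V × V × G₂))
    (_ : Full p ψ (relabel inl SA ++ relabel inr SB)),
    ∃ (W : Type w) (_ : Fintype W) (p' : W → Q) (TA : List (W × W × G₁))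
      (TB : List (W × W × G₂)), Function.Bijective p' ∧
      Full p' (ψ.comp inl) TA ∧ Full p' (ψ.comp inr) TB ∧
      TA.length + TB.length + Fintype.card V = SA.length + SB.length + Fintype.card Q := by
  classical
  induction m with
  | zero =>
    intro V _ hV p hp SA SB hS
    have : IsEmpty V := Fintype.card_eq_zero_iff.1 hV
    exact isEmptyElim (hp 1).choose
  | succ m ih =>
    intro V _ hV p hp SA SB hS
    by_cases hA : ∀ x y, Gen SA x y 1 → x = y
    · by_cases hB : ∀ x y, Gen SB x y 1 → x = y
      · obtain ⟨h0, h1, h2⟩ := determ SA SB hA hB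
        have hinj : Function.Injective p := by
          intro x y hxy
          exact h0 x y ((hS _ _ _).2 (by simp [hxy]))
        refine ⟨V, inferInstance, p, SA, SB, ⟨hinj, hp⟩, ?_, ?_, ?_⟩
        · intro x y a
          exact ⟨fun h => (hS _ _ _).1 ((h.relabel (inl : G₁ →* Monoid.Coprod G₁ G₂)).mono
            (List.subset_append_left _ _)),
            fun h => h1 _ _ _ ((hS _ _ _).2 h)⟩
        · intro x y a
          exact ⟨fun h => (hS _ _ _).1 ((h.relabel (inr : G₂ →* Monoid.Coprod G₁ G₂)).mono
            (List.subset_append_right _ _)),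
            fun h => h2 _ _ _ ((hS _ _ _).2 h)⟩
        · rw [Fintype.card_of_bijective ⟨hinj, hp⟩]
      · push Not at hB
        obtain ⟨v, w, h, hvw⟩ := hB
        obtain ⟨SB', SA', hl1, hl2, hf, hs⟩ := fold inr inl ψ p SB SA
          (hS.congr (by intro t; simp only [List.mem_append]; tauto)) hp hvw h
        have hc : Fintype.card {x // x ≠ w} = m := by
          rw [Fintype.card_subtype_compl]; simp [hV]
        obtain ⟨W, hW, p', TA, TB, hb, ha, hb', hl⟩ := ih (V := {x // x ≠ w}) hc _ hs SA' SB'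
          (hf.congr (by intro t; simp only [List.mem_append]; tauto))
        exact ⟨W, hW, p', TA, TB, hb, ha, hb', by omega⟩
    · push Not at hA
      obtain ⟨v, w, h, hvw⟩ := hA
      obtain ⟨SA', SB', hl1, hl2, hf, hs⟩ := fold inl inr ψ p SA SB hS hp hvw h
      have hc : Fintype.card {x // x ≠ w} = m := by
        rw [Fintype.card_subtype_compl]; simp [hV]
      obtain ⟨W, hW, p', TA, TB, hb, ha, hb', hl⟩ := ih (V := {x // x ≠ w}) hc _ hs SA' SB' hf
      exact ⟨W, hW, p', TA, TB, hb, ha, hb', by omega⟩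

theorem add_vertex {V G Q : Type*} [Group G] [Group Q] (p : V → Q) (ψ : G →* Q) (x y : V)
    (g h : G) (T : List (V × V × G)) (hT : Full p ψ ((x, y, g * h) :: T)) :
    Full (fun o : Option V => o.elim (p x * ψ g) p) ψ
      ((some x, none, g) :: (none, some y, h) :: push some T) := by
  have hval : ∀ a b k, (a, b, k) ∈ ((x, y, g * h) :: T) → p b = p a * ψ k :=
    fun a b k hm => (hT _ _ _).1 (Gen.of hm)
  set L := (some x, none, g) :: (none, some y, h) :: push some T with hL
  have e1 : Gen L (some x) none g := Gen.of (by simp [hL])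
  have e2 : Gen L none (some y) h := Gen.of (by simp [hL])
  have hsome : ∀ a b k, p b = p a * ψ k → Gen L (some a) (some b) k := by
    intro a b k hk
    refine Gen.bind (T := L) some (MonoidHom.id G) ?_ ((hT _ _ _).2 hk)
    intro a b k hm
    rcases List.mem_cons.1 hm with hm | hm
    · simp only [Prod.mk.injEq] at hm
      obtain ⟨rfl, rfl, rfl⟩ := hm
      exact e1.mul e2
    · refine Gen.of ?_
      simp only [hL, List.mem_cons]
      exact Or.inr (Or.inr (mem_push.2 ⟨_, _, hm, rfl, rfl⟩))
  intro a b k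
  constructor
  · refine Gen.valid (fun o : Option V => o.elim (p x * ψ g) p) ψ ?_
    intro a b k hm
    simp only [hL, List.mem_cons, Prod.mk.injEq] at hm
    rcases hm with ⟨rfl, rfl, rfl⟩ | ⟨rfl, rfl, rfl⟩ | hm
    · rfl
    · simpa [mul_assoc] using hval x y _ List.mem_cons_self
    · obtain ⟨a', b', hm', rfl, rfl⟩ := mem_push.1 hm
      exact hval _ _ _ (List.mem_cons_of_mem _ hm')
  · intro hk
    rcases a with _ | a <;> rcases b with _ | b <;> simp only [Option.elim] at hk
    · have := hsome x x (g * k * g⁻¹) (by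
        rw [map_mul, map_mul, ← mul_assoc, ← mul_assoc, ← hk]; simp)
      simpa [mul_assoc] using (e1.inv.mul this).mul e1
    · have := hsome x b (g * k) (by rw [map_mul, ← mul_assoc, ← hk])
      simpa [mul_assoc] using e1.inv.mul this
    · have := hsome a x (k * g⁻¹) (by rw [map_mul, ← mul_assoc, ← hk]; simp)
      simpa [mul_assoc] using this.mul e1
    · exact hsome a b k hk

theorem push_relabel {V W G K : Type*} [Group G] [Group K] (f : V → W) (φ : G →* K)
    (S : List (V × V × G)) : push f (relabel φ S) = relabel φ (push f S) := by
  simp [push, relabel]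

theorem push_append {V W G : Type*} (f : V → W) (S T : List (V × V × G)) :
    push f (S ++ T) = push f S ++ push f T := by
  simp [push]

theorem length_push {V W G : Type*} (f : V → W) (S : List (V × V × G)) :
    (push f S).length = S.length := by
  simp [push]

theorem relabel_cons {V G K : Type*} [Group G] [Group K] (φ : G →* K) (x y : V) (g : G)
    (S : List (V × V × G)) : relabel φ ((x, y, g) :: S) = (x, y, φ g) :: relabel φ S := rfl

theorem subdiv_one {G₁ G₂ Q : Type*} [Group G₁] [Group G₂] [Group Q]
    (ψ : Monoid.Coprod G₁ G₂ →* Q) (γ : Monoid.Coprod G₁ G₂) :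
    ∀ (V : Type w) [Fintype V] (p : V → Q) (_ : Function.Surjective p) (x y : V)
    (T : List (V × V × Monoid.Coprod G₁ G₂))
    (SA : List (V × V × G₁)) (SB : List (V × V × G₂))
    (_ : Full p ψ ((x, y, γ) :: (T ++ (relabel inl SA ++ relabel inr SB)))),
    ∃ (W : Type w) (_ : Fintype W) (p' : W → Q) (T' : List (W × W × Monoid.Coprod G₁ G₂))
      (TA : List (W × W × G₁))
      (TB : List (W × W × G₂)), Function.Surjective p' ∧
      Full p' ψ (T' ++ (relabel inl TA ++ relabel inr TB)) ∧ T'.length = T.length ∧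
      TA.length + TB.length + Fintype.card V = SA.length + SB.length + 1 + Fintype.card W := by
  induction γ using Monoid.Coprod.induction_on' with
  | one =>
    intro V _ p hp x y T SA SB h
    refine ⟨V, inferInstance, p, T, (x, y, 1) :: SA, SB, hp, h.congr ?_, rfl, by simp; omega⟩
    intro t
    simp only [relabel_cons, map_one, List.mem_append, List.mem_cons]
    tauto
  | inl_mul a γ ih =>
    intro V _ p hp x y T SA SB h
    have h1 := add_vertex p ψ x y (inl a) γ _ h
    obtain ⟨W, hW, p', T', TA, TB, hs, hf, hl, hc⟩ := ih (Option V) _ (fun q => by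
      obtain ⟨z, rfl⟩ := hp q
      exact ⟨some z, rfl⟩) none (some y) (push some T) ((some x, none, a) :: push some SA)
      (push some SB) (h1.congr (by
        intro t
        simp only [relabel_cons, push_append, push_relabel, List.mem_append, List.mem_cons]
        tauto))
    refine ⟨W, hW, p', T', TA, TB, hs, hf, by rw [hl, length_push], ?_⟩
    simp only [List.length_cons, length_push, Fintype.card_option] at hc
    omega
  | inr_mul a γ ih =>
    intro V _ p hp x y T SA SB h
    have h1 := add_vertex p ψ x y (inr a) γ _ h
    obtain ⟨W, hW, p', T', TA, TB, hs, hf, hl, hc⟩ := ih (Option V) _ (fun q => by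
      obtain ⟨z, rfl⟩ := hp q
      exact ⟨some z, rfl⟩) none (some y) (push some T) (push some SA)
      ((some x, none, a) :: push some SB) (h1.congr (by
        intro t
        simp only [relabel_cons, push_append, push_relabel, List.mem_append, List.mem_cons]
        tauto))
    refine ⟨W, hW, p', T', TA, TB, hs, hf, by rw [hl, length_push], ?_⟩
    simp only [List.length_cons, length_push, Fintype.card_option] at hc
    omega

theorem subdiv {G₁ G₂ Q : Type*} [Group G₁] [Group G₂] [Group Q]
    (ψ : Monoid.Coprod G₁ G₂ →* Q) (m : ℕ) :
    ∀ (V : Type w) [Fintype V] (p : V → Q) (_ : Function.Surjective p)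
    (T : List (V × V × Monoid.Coprod G₁ G₂)) (_ : T.length = m)
    (SA : List (V × V × G₁)) (SB : List (V × V × G₂))
    (_ : Full p ψ (T ++ (relabel inl SA ++ relabel inr SB))),
    ∃ (W : Type w) (_ : Fintype W) (p' : W → Q)
      (TA : List (W × W × G₁))
      (TB : List (W × W × G₂)), Function.Surjective p' ∧
      Full p' ψ (relabel inl TA ++ relabel inr TB) ∧
      TA.length + TB.length + Fintype.card V = SA.length + SB.length + m + Fintype.card W := by
  induction m with
  | zero =>
    intro V _ p hp T hT SA SB h
    rw [List.length_eq_zero_iff] at hT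
    subst hT
    exact ⟨V, inferInstance, p, SA, SB, hp, h, by omega⟩
  | succ m ih =>
    intro V _ p hp T hT SA SB h
    obtain _ | ⟨⟨x, y, γ⟩, T⟩ := T
    · simp at hT
    obtain ⟨W, hW, p', T', TA, TB, hs, hf, hl, hc⟩ := subdiv_one ψ γ V p hp x y T SA SB h
    obtain ⟨W', hW', p'', TA', TB', hs', hf', hc'⟩ := ih W p' hs T'
      (by simp at hT; omega) TA TB hf
    exact ⟨W', hW', p'', TA', TB', hs', hf', by omega⟩

theorem fg_coprod {G₁ G₂ : Type*} [Group G₁] [Group G₂] [Group.FG G₁] [Group.FG G₂] :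
    Group.FG (Monoid.Coprod G₁ G₂) := by
  have h1 : (inl : G₁ →* Monoid.Coprod G₁ G₂).range.FG := by
    rw [← Group.fg_iff_subgroup_fg]; infer_instance
  have h2 : (inr : G₂ →* Monoid.Coprod G₁ G₂).range.FG := by
    rw [← Group.fg_iff_subgroup_fg]; infer_instance
  have h3 := h1.sup h2
  rw [Monoid.Coprod.range_inl_sup_range_inr] at h3
  exact ⟨h3⟩

theorem card_quot_range {G Q : Type*} [Group G] [Group Q] [Fintype Q] (ψ : G →* Q)
    [Fintype (Q ⧸ ψ.range)] :
    Fintype.card (Q ⧸ ψ.range) * ψ.ker.index = Fintype.card Q := by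
  rw [Subgroup.index_ker, ← Nat.card_eq_fintype_card, ← Nat.card_eq_fintype_card]
  exact (Subgroup.card_eq_card_quotient_mul_card_subgroup ψ.range).symm

end GrushkoAux

open Monoid.Coprod in
/-- For a normal subgroup `N` of finite index `n` in the free product `G₁ ∗ G₂` of
finitely generated groups, with `Nⱼ = N ∩ Gⱼ` of index `kⱼ` in `Gⱼ`, one has
`(d(N)-1)/n = (d(N₁)-1)/k₁ + (d(N₂)-1)/k₂ + 1`. -/
theorem rank_of_normal_in_free_product {G₁ G₂ : Type*} [Group G₁] [Group G₂]
    [Group.FG G₁] [Group.FG G₂]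
    (N : Subgroup (Monoid.Coprod G₁ G₂)) (hNnorm : N.Normal) (hNfi : N.FiniteIndex)
    (n : ℕ) (hn : N.index = n)
    (k₁ k₂ : ℕ) (hk₁ : (N.comap (inl : G₁ →* Monoid.Coprod G₁ G₂)).index = k₁)
    (hk₂ : (N.comap (inr : G₂ →* Monoid.Coprod G₁ G₂)).index = k₂) :
    ((d N : ℝ) - 1) / n =
      ((d (N.comap (inl : G₁ →* Monoid.Coprod G₁ G₂)) : ℝ) - 1) / k₁ +
      ((d (N.comap (inr : G₂ →* Monoid.Coprod G₁ G₂)) : ℝ) - 1) / k₂ + 1 := by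
  classical
  have hfg : Group.FG (Monoid.Coprod G₁ G₂) := GrushkoAux.fg_coprod
  let Q := Monoid.Coprod G₁ G₂ ⧸ N
  let ψ : Monoid.Coprod G₁ G₂ →* Q := QuotientGroup.mk' N
  have : Fintype Q := Fintype.ofFinite _
  have hker : ψ.ker = N := QuotientGroup.ker_mk' N
  have hker₁ : (ψ.comp inl).ker = N.comap (inl : G₁ →* Monoid.Coprod G₁ G₂) := by
    rw [← MonoidHom.comap_ker, hker]
  have hker₂ : (ψ.comp inr).ker = N.comap (inr : G₂ →* Monoid.Coprod G₁ G₂) := by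
    rw [← MonoidHom.comap_ker, hker]
  have : Fintype (Q ⧸ ψ.range) := Fintype.ofFinite _
  have : Fintype (Q ⧸ (ψ.comp inl).range) := Fintype.ofFinite _
  have : Fintype (Q ⧸ (ψ.comp inr).range) := Fintype.ofFinite _
  have hcQ : Fintype.card Q = n := by
    rw [← hn, ← Nat.card_eq_fintype_card]; rfl
  have hc := GrushkoAux.card_quot_range ψ
  have hc₁ := GrushkoAux.card_quot_range (ψ.comp inl)
  have hc₂ := GrushkoAux.card_quot_range (ψ.comp inr)
  have hn0 : n ≠ 0 := hn ▸ hNfi.index_ne_zero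
  rw [hker, hn, hcQ] at hc
  rw [hker₁, hk₁, hcQ] at hc₁
  rw [hker₂, hk₂, hcQ] at hc₂
  have hc1 : Fintype.card (Q ⧸ ψ.range) = 1 := by
    apply Nat.eq_of_mul_eq_mul_right (Nat.pos_of_ne_zero hn0); omega
  have hk₁0 : k₁ ≠ 0 := by rintro rfl; simp at hc₁; exact hn0 hc₁.symm
  have hk₂0 : k₂ ≠ 0 := by rintro rfl; simp at hc₂; exact hn0 hc₂.symm
  have fgN : ψ.ker.FG := by
    rw [hker, ← Group.fg_iff_subgroup_fg]; infer_instance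
  have fgN₁ : (ψ.comp inl).ker.FG := by
    rw [hker₁, ← Group.fg_iff_subgroup_fg]
    have : (N.comap (inl : G₁ →* Monoid.Coprod G₁ G₂)).FiniteIndex := ⟨hk₁ ▸ hk₁0⟩
    infer_instance
  have fgN₂ : (ψ.comp inr).ker.FG := by
    rw [hker₂, ← Group.fg_iff_subgroup_fg]
    have : (N.comap (inr : G₂ →* Monoid.Coprod G₁ G₂)).FiniteIndex := ⟨hk₂ ▸ hk₂0⟩
    infer_instance
  -- upper bound for `d N`
  have hub : Fintype.card Q + d N + Fintype.card (Q ⧸ (ψ.comp inl).range) +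
      Fintype.card (Q ⧸ (ψ.comp inr).range) ≤ 1 + (Fintype.card Q +
        Fintype.card (Q ⧸ (ψ.comp inl).range) *
          d (N.comap (inl : G₁ →* Monoid.Coprod G₁ G₂))) + (Fintype.card Q +
        Fintype.card (Q ⧸ (ψ.comp inr).range) *
          d (N.comap (inr : G₂ →* Monoid.Coprod G₁ G₂))) := by
    obtain ⟨SA, hA, lA⟩ := GrushkoAux.upper_bound (ψ.comp inl) fgN₁
    obtain ⟨SB, hB, lB⟩ := GrushkoAux.upper_bound (ψ.comp inr) fgN₂
    have hfull : GrushkoAux.Full id ψ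
        (GrushkoAux.relabel inl SA ++ GrushkoAux.relabel inr SB) := by
      intro x y g
      constructor
      · refine GrushkoAux.Gen.valid id ψ ?_
        intro x y g hm
        rcases List.mem_append.1 hm with hm | hm
        · obtain ⟨a, ha, rfl⟩ := GrushkoAux.mem_relabel.1 hm
          exact (hA _ _ _).1 (GrushkoAux.Gen.of ha)
        · obtain ⟨a, ha, rfl⟩ := GrushkoAux.mem_relabel.1 hm
          exact (hB _ _ _).1 (GrushkoAux.Gen.of ha)
      · simp only [id]
        rintro rfl
        induction g using Monoid.Coprod.induction_on' generalizing x with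
        | one => simpa using GrushkoAux.Gen.one x
        | inl_mul a γ ih =>
          rw [map_mul, ← mul_assoc]
          exact ((((hA x _ a).2 rfl).relabel inl).mono (by simp)).mul (ih _)
        | inr_mul a γ ih =>
          rw [map_mul, ← mul_assoc]
          exact ((((hB x _ a).2 rfl).relabel inr).mono (by simp)).mul (ih _)
    have := GrushkoAux.lower_bound ψ _ rfl id _ hfull (QuotientGroup.mk_surjective)
    rw [hc1, hker, List.length_append] at this
    simp only [GrushkoAux.relabel, List.length_map] at this
    rw [hker₁] at lA
    rw [hker₂] at lB
    omega
  -- lower bound for `d N`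
  have hlb : (Fintype.card Q +
        Fintype.card (Q ⧸ (ψ.comp inl).range) *
          d (N.comap (inl : G₁ →* Monoid.Coprod G₁ G₂))) + (Fintype.card Q +
        Fintype.card (Q ⧸ (ψ.comp inr).range) *
          d (N.comap (inr : G₂ →* Monoid.Coprod G₁ G₂))) + 1 ≤
      Fintype.card Q + d N + Fintype.card (Q ⧸ (ψ.comp inl).range) +
      Fintype.card (Q ⧸ (ψ.comp inr).range) := by
    obtain ⟨S, hS, lS⟩ := GrushkoAux.upper_bound ψ fgN
    rw [hc1, hker] at lS
    obtain ⟨W, _, p, SA, SB, hp, hf, hl⟩ := GrushkoAux.subdiv ψ _ Q id Function.surjective_id S rfl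
      [] [] (by simpa [GrushkoAux.relabel] using hS)
    obtain ⟨V, _, p', TA, TB, hb, hA, hB, hl'⟩ := GrushkoAux.fold_all ψ _ rfl p hp SA SB hf
    have l1 := GrushkoAux.lower_bound _ _ rfl p' TA hA
      (QuotientGroup.mk_surjective.comp hb.surjective)
    have l2 := GrushkoAux.lower_bound _ _ rfl p' TB hB
      (QuotientGroup.mk_surjective.comp hb.surjective)
    rw [Fintype.card_of_bijective hb] at l1 l2
    rw [hker₁] at l1
    rw [hker₂] at l2
    simp only [List.length_nil] at hl
    omega
  have heq := le_antisymm hub (by omega)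
  rw [hcQ] at heq
  set c₁ := Fintype.card (Q ⧸ (ψ.comp inl).range)
  set c₂ := Fintype.card (Q ⧸ (ψ.comp inr).range)
  have hR : (n : ℝ) + d N + c₁ + c₂ = 1 +
      (n + c₁ * d (N.comap (inl : G₁ →* Monoid.Coprod G₁ G₂))) +
      (n + c₂ * d (N.comap (inr : G₂ →* Monoid.Coprod G₁ G₂))) := by exact_mod_cast heq
  have r₁ : (c₁ : ℝ) = n / k₁ := by
    rw [eq_div_iff (by exact_mod_cast hk₁0)]; exact_mod_cast hc₁
  have r₂ : (c₂ : ℝ) = n / k₂ := by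
    rw [eq_div_iff (by exact_mod_cast hk₂0)]; exact_mod_cast hc₂
  rw [r₁, r₂] at hR
  have q0 : (n : ℝ) ≠ 0 := by exact_mod_cast hn0
  have q1 : (k₁ : ℝ) ≠ 0 := by exact_mod_cast hk₁0
  have q2 : (k₂ : ℝ) ≠ 0 := by exact_mod_cast hk₂0
  rw [div_eq_iff q0]
  have : (d N : ℝ) - 1 = n + n / k₁ * d (N.comap (inl : G₁ →* Monoid.Coprod G₁ G₂))
    + n / k₂ * d (N.comap (inr : G₂ →* Monoid.Coprod G₁ G₂)) - n / k₁ - n / k₂ := by linarith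
  rw [this]
  ring
end

section
/- Let Γ be a finitely generated group with an infinite abelian normal subgroup A which is generated by one element as a Γ-module (i.e., A is the normal closure of a single element), and let (Γⱼ) be a chain of finite index subgroups with trivial intersection. Suppose d(Γ) = d. For each j set Mⱼ = A ∩ Γⱼ, aⱼ = [Γ : AΓⱼ], bⱼ = [A : Mⱼ]. Then d(Γⱼ) ≤ aⱼ·d + aⱼ + (2d·aⱼ + 1)·log₂(bⱼ), and consequently (d(Γⱼ)-1)/[Γ : Γⱼ] ≤ d/bⱼ + (1 + (2d+1)log₂ bⱼ)/bⱼ → 0, so RG(Γ,(Γⱼ)) = 0. -/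
open Filter

lemma aux_gens {A : Type*} [CommGroup A] : ∀ n : ℕ, ∀ M : Subgroup A, M.index = n → n ≠ 0 →
    ∃ Y E : Finset A, 2 ^ Y.card ≤ n ∧ 2 ^ E.card ≤ n ∧ (∀ e ∈ E, e ∈ M) ∧
      Subgroup.closure (Y : Set A) ⊓ M ≤ Subgroup.closure (E : Set A) ∧
      Subgroup.closure (Y : Set A) ⊔ M = ⊤ := by
  classical
  intro n
  induction n using Nat.strong_induction_on with
  | _ n ih =>
  intro M hM hn
  by_cases hT : M = ⊤
  · subst hT
    refine ⟨∅, ∅, ?_, ?_, ?_, ?_, ?_⟩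
    · simp; omega
    · simp; omega
    · simp
    · simp
    · simp
  obtain ⟨y, hy⟩ : ∃ y, y ∉ M := by
    by_contra! h
    exact hT (eq_top_iff.2 fun x _ => h x)
  set M1 := M ⊔ Subgroup.zpowers y with hM1
  have hle : M ≤ M1 := le_sup_left
  have hyM1 : y ∈ M1 := (le_sup_right : _ ≤ M1) (Subgroup.mem_zpowers y)
  have hmul : M.relIndex M1 * M1.index = M.index := Subgroup.relIndex_mul_index hle
  have h1 : M.relIndex M1 ≠ 1 := by
    intro h
    rw [Subgroup.relIndex_eq_one] at h
    exact hy (h hyM1)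
  have h0 : M.relIndex M1 ≠ 0 := by
    intro h; rw [h] at hmul; omega
  have h0' : M1.index ≠ 0 := by
    intro h; rw [h] at hmul; omega
  have h2 : 2 * M1.index ≤ n := by
    rw [← hM, ← hmul]; exact Nat.mul_le_mul_right _ (by omega)
  obtain ⟨Y, E, hYc, hEc, hEM, hYE, hYM⟩ := ih M1.index (by omega) M1 rfl h0'
  have hex : ∀ e : A, ∃ k : ℤ, e ∈ M1 → e * y ^ k ∈ M := by
    intro e
    by_cases he : e ∈ M1
    · obtain ⟨m, hm, z, hz, rfl⟩ := Subgroup.mem_sup.1 he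
      obtain ⟨k, rfl⟩ := Subgroup.mem_zpowers_iff.1 hz
      exact ⟨-k, fun _ => by simpa using hm⟩
    · exact ⟨0, fun h => absurd h he⟩
  choose k hk using hex
  set o := orderOf (y : A ⧸ M) with ho
  have hyo : ∀ i : ℤ, y ^ i ∈ M ↔ (o : ℤ) ∣ i := by
    intro i
    rw [ho, orderOf_dvd_iff_zpow_eq_one, ← QuotientGroup.eq_one_iff, QuotientGroup.mk_zpow]
  set E' := insert (y ^ (o : ℤ)) (E.image fun e => e * y ^ k e) with hE'
  refine ⟨insert y Y, E', ?_, ?_, ?_, ?_, ?_⟩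
  · calc 2 ^ (insert y Y).card ≤ 2 ^ (Y.card + 1) :=
          Nat.pow_le_pow_right (by norm_num) (Finset.card_insert_le _ _)
      _ ≤ n := by rw [pow_succ]; omega
  · calc 2 ^ E'.card ≤ 2 ^ (E.card + 1) :=
          Nat.pow_le_pow_right (by norm_num) ((Finset.card_insert_le _ _).trans
            (Nat.succ_le_succ Finset.card_image_le))
      _ ≤ n := by rw [pow_succ]; omega
  · intro e he
    rw [hE', Finset.mem_insert, Finset.mem_image] at he
    rcases he with rfl | ⟨e, he, rfl⟩
    · exact (hyo _).2 dvd_rfl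
    · exact hk e (hEM e he)
  · have hE'M : Subgroup.closure (E' : Set A) ≤ M := by
      rw [Subgroup.closure_le]
      intro e he
      have he' : e ∈ E' := he
      clear he
      rw [hE', Finset.mem_insert, Finset.mem_image] at he'
      rcases he' with rfl | ⟨e, he1, rfl⟩
      · exact (hyo _).2 dvd_rfl
      · exact hk e (hEM e he1)
    have hEE : Subgroup.closure (E : Set A) ≤
        Subgroup.closure (E' : Set A) ⊔ Subgroup.zpowers y := by
      rw [Subgroup.closure_le]
      intro e he
      refine Subgroup.mem_sup.2 ⟨e * y ^ k e, Subgroup.subset_closure ?_, y ^ (-k e),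
        Subgroup.zpow_mem_zpowers _ _, by simp⟩
      exact Finset.mem_insert_of_mem (Finset.mem_image_of_mem _ he)
    rintro u ⟨hu, huM⟩
    have huM : u ∈ M := huM
    rw [Finset.coe_insert, SetLike.mem_coe, Set.insert_eq, Subgroup.closure_union,
      ← Subgroup.zpowers_eq_closure, sup_comm] at hu
    obtain ⟨w, hw, z, hz, rfl⟩ := Subgroup.mem_sup.1 hu
    have hzM1 : z ∈ M1 := (le_sup_right : _ ≤ M1) hz
    have hwM1 : w ∈ M1 := by
      have := M1.mul_mem (hle huM) (M1.inv_mem hzM1)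
      simpa using this
    obtain ⟨v, hv, z', hz', rfl⟩ := Subgroup.mem_sup.1 (hEE (hYE ⟨hw, hwM1⟩))
    have hzz : z' * z ∈ Subgroup.zpowers y := mul_mem hz' hz
    obtain ⟨i, hi⟩ := Subgroup.mem_zpowers_iff.1 hzz
    rw [mul_assoc] at huM ⊢
    have hzM : z' * z ∈ M := by
      have := M.mul_mem (M.inv_mem (hE'M hv)) huM
      simpa using this
    rw [← hi] at hzM ⊢
    obtain ⟨c, rfl⟩ := (hyo i).1 hzM
    refine mul_mem hv ?_
    rw [zpow_mul]
    exact zpow_mem (Subgroup.subset_closure (Finset.mem_insert_self _ _)) _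
  · rw [eq_top_iff, ← hYM, hM1]
    refine sup_le ?_ (sup_le le_sup_right ?_)
    · exact le_sup_of_le_left (Subgroup.closure_mono (by simp))
    · refine le_sup_of_le_left ?_
      rw [Subgroup.zpowers_le]
      exact Subgroup.subset_closure (by simp)

lemma d_le_of_closure {G : Type*} [Group G] (H : Subgroup G) (S : Finset G)
    (hS : Subgroup.closure (S : Set G) = H) : d H ≤ S.card := by
  classical
  have hSH : ∀ s ∈ S, s ∈ H := fun s hs => hS ▸ Subgroup.subset_closure hs
  have hc : (S.attach.image fun s => (⟨s.1, hSH s.1 s.2⟩ : H)).card ≤ S.card :=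
    Finset.card_image_le.trans (by simp)
  refine le_trans (Nat.sInf_le ⟨S.attach.image fun s => (⟨s.1, hSH s.1 s.2⟩ : H), rfl, ?_⟩) hc
  apply Subgroup.map_injective H.subtype_injective
  rw [MonoidHom.map_closure, ← MonoidHom.range_eq_map, Subgroup.range_subtype]
  conv_rhs => rw [← hS]
  congr 1
  ext z
  simpa using hSH z

lemma exists_d_gens (G : Type*) [Group G] [Group.FG G] :
    ∃ S : Finset G, S.card = d G ∧ Subgroup.closure (S : Set G) = ⊤ := by
  obtain ⟨S, hS⟩ := Group.FG.out (G := G)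
  exact Nat.sInf_mem (s := {n | ∃ S : Finset G, S.card = n ∧
    Subgroup.closure (S : Set G) = ⊤}) ⟨S.card, S, rfl, hS⟩

section
variable {Γ : Type*} [Group Γ]

lemma exists_T [Group.FG Γ] (A H : Subgroup Γ) [A.Normal] [H.FiniteIndex] :
    ∃ T : Finset Γ, T.card ≤ (A ⊔ H).index * d Γ ∧ (∀ t ∈ T, t ∈ H) ∧
      H ≤ Subgroup.closure (T : Set Γ) ⊔ (A ⊓ H) := by
  classical
  obtain ⟨S, hSc, hS⟩ := exists_d_gens Γ
  have : (A ⊔ H).FiniteIndex := Subgroup.finiteIndex_of_le (le_sup_right : H ≤ A ⊔ H)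
  obtain ⟨T', hT'c, hT'⟩ := Subgroup.exists_finset_card_le_mul (A ⊔ H) hS
  have hex : ∀ t : (A ⊔ H : Subgroup Γ), ∃ h ∈ H, ∃ α ∈ A, (t : Γ) = α * h := by
    intro t
    obtain ⟨α, hα, h, hh, e⟩ := Subgroup.mem_sup_of_normal_left.1 t.2
    exact ⟨h, hh, α, hα, e.symm⟩
  choose h hh α hα e using hex
  refine ⟨T'.image h, ?_, ?_, ?_⟩
  · rw [← hSc]; exact Finset.card_image_le.trans hT'c
  · intro t ht
    obtain ⟨s, _, rfl⟩ := Finset.mem_image.1 ht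
    exact hh s
  · set C := Subgroup.closure ((T'.image h : Finset Γ) : Set Γ) with hC
    have hCH : C ≤ H := by
      rw [hC, Subgroup.closure_le]
      intro t ht
      obtain ⟨s, _, rfl⟩ := Finset.mem_image.1 (Finset.mem_coe.1 ht)
      exact hh s
    have h1 : A ⊔ H ≤ A ⊔ C := by
      have : Subgroup.map (A ⊔ H).subtype (Subgroup.closure (T' : Set _)) = A ⊔ H := by
        rw [hT', ← MonoidHom.range_eq_map, Subgroup.range_subtype]
      rw [← this, MonoidHom.map_closure, Subgroup.closure_le]
      rintro _ ⟨t, ht, rfl⟩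
      change (t : Γ) ∈ A ⊔ C
      rw [e t]
      refine Subgroup.mul_mem_sup (hα t) (Subgroup.subset_closure ?_)
      exact Finset.mem_image_of_mem _ ht
    intro g hg
    obtain ⟨a, ha, c, hc, rfl⟩ := Subgroup.mem_sup_of_normal_left.1
      (h1 ((le_sup_right : H ≤ A ⊔ H) hg))
    have haH : a ∈ H := by
      have := H.mul_mem hg (H.inv_mem (hCH hc)); simpa using this
    exact mul_mem ((le_sup_right : _ ≤ C ⊔ A ⊓ H) ⟨ha, haH⟩) ((le_sup_left : C ≤ C ⊔ A ⊓ H) hc)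

lemma exists_X (A H : Subgroup Γ) [A.Normal] [H.FiniteIndex]
    (hAab : ∀ x ∈ A, ∀ y ∈ A, x * y = y * x) (x : Γ) (hx : A = Subgroup.normalClosure {x}) :
    ∃ X : Finset Γ, X.card ≤ (A ⊔ H).index ∧ (∀ t ∈ X, t ∈ A) ∧
      ∀ B : Subgroup Γ, (∀ t ∈ X, t ∈ B) → (∀ h ∈ H, ∀ b ∈ B, h * b * h⁻¹ ∈ B) → A ≤ B := by
  classical
  have : (A ⊔ H).FiniteIndex := Subgroup.finiteIndex_of_le (le_sup_right : H ≤ A ⊔ H)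
  have : Fintype (Γ ⧸ (A ⊔ H)) := Fintype.ofFinite _
  have hxA : x ∈ A := hx ▸ Subgroup.subset_normalClosure rfl
  refine ⟨Finset.univ.image fun q : Γ ⧸ (A ⊔ H) => q.out⁻¹ * x * q.out, ?_, ?_, ?_⟩
  · refine Finset.card_image_le.trans ?_
    rw [Subgroup.index, Nat.card_eq_fintype_card, Finset.card_univ]
  · intro t ht
    obtain ⟨q, _, rfl⟩ := Finset.mem_image.1 ht
    have := Subgroup.Normal.conj_mem ‹A.Normal› x hxA q.out⁻¹
    simpa using this
  · intro B hXB hB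
    conv_lhs => rw [hx]
    rw [Subgroup.normalClosure, Subgroup.closure_le]
    intro z hz
    obtain ⟨y, hy, hyz⟩ := Group.mem_conjugatesOfSet_iff.1 hz
    rw [Set.mem_singleton_iff] at hy
    subst hy
    obtain ⟨g, rfl⟩ := isConj_iff.1 hyz
    obtain ⟨k, hk⟩ := QuotientGroup.mk_out_eq_mul (A ⊔ H) g⁻¹
    set q : Γ ⧸ (A ⊔ H) := ((g⁻¹ : Γ) : Γ ⧸ (A ⊔ H)) with hq
    have hu : q.out⁻¹ * y * q.out ∈ B := hXB _ (Finset.mem_image_of_mem _ (Finset.mem_univ q))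
    have huA : q.out⁻¹ * y * q.out ∈ A := by
      have := Subgroup.Normal.conj_mem ‹A.Normal› y hxA q.out⁻¹
      simpa using this
    set u := q.out⁻¹ * y * q.out with hu'
    obtain ⟨h, hh, a, ha, e⟩ := Subgroup.mem_sup_of_normal_right.1
      (show (k : Γ) ∈ H ⊔ A by rw [sup_comm]; exact k.2)
    have e1 : g * y * g⁻¹ = h * (a * u * a⁻¹) * h⁻¹ := by
      have : y = q.out * u * q.out⁻¹ := by rw [hu']; group
      rw [this, hk, ← e]; group
    have e2 : a * u * a⁻¹ = u := by rw [hAab a ha u huA]; group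
    change g * y * g⁻¹ ∈ B
    rw [e1, e2]
    exact hB h hh u hu

lemma d_bound_nat [Group.FG Γ] (A H : Subgroup Γ) [A.Normal] [H.FiniteIndex]
    (hAab : ∀ x y : A, x * y = y * x) (x : Γ) (hx : A = Subgroup.normalClosure {x}) :
    ∃ r s : ℕ, 2 ^ r ≤ (H.subgroupOf A).index ∧ 2 ^ s ≤ (H.subgroupOf A).index ∧
      d H ≤ (A ⊔ H).index * d Γ + (A ⊔ H).index + s + 2 * ((A ⊔ H).index * d Γ) * r := by
  classical
  have hAab' : ∀ x ∈ A, ∀ y ∈ A, x * y = y * x := fun x hx y hy =>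
    congrArg Subtype.val (hAab ⟨x, hx⟩ ⟨y, hy⟩)
  obtain ⟨T, hTc, hTH, hT⟩ := exists_T A H
  obtain ⟨X, hXc, hXA, hX⟩ := exists_X A H hAab' x hx
  obtain ⟨Y, E, hYc, hEc, hEM, hYE, hYM⟩ : ∃ Y E : Finset A, 2 ^ Y.card ≤ (H.subgroupOf A).index ∧
      2 ^ E.card ≤ (H.subgroupOf A).index ∧ (∀ e ∈ E, e ∈ H.subgroupOf A) ∧
      Subgroup.closure (Y : Set A) ⊓ H.subgroupOf A ≤ Subgroup.closure (E : Set A) ∧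
      Subgroup.closure (Y : Set A) ⊔ H.subgroupOf A = ⊤ := by
    let : CommGroup A := { (inferInstance : Group A) with mul_comm := hAab }
    exact aux_gens _ (H.subgroupOf A) rfl Subgroup.FiniteIndex.index_ne_zero
  refine ⟨Y.card, E.card, hYc, hEc, ?_⟩
  -- closure of Y inside Γ
  set CY := (Subgroup.closure (Y : Set A)).map A.subtype with hCY
  have hCYA : CY ≤ A := Subgroup.map_subtype_le _
  have hYCY : ∀ y ∈ Y, (y : Γ) ∈ CY := fun y hy =>
    Subgroup.mem_map_of_mem A.subtype (Subgroup.subset_closure hy)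
  have hex : ∀ u : Γ, ∃ w ∈ CY, u ∈ A → u * w⁻¹ ∈ H := by
    intro u
    by_cases hu : u ∈ A
    · have hmem : (⟨u, hu⟩ : A) ∈ H.subgroupOf A ⊔ Subgroup.closure (Y : Set A) := by
        rw [sup_comm, hYM]; trivial
      have : (Subgroup.closure (Y : Set A)).Normal :=
        ⟨fun n hn g => by rw [hAab g n]; simpa using hn⟩
      obtain ⟨m, hm, w, hw, e⟩ := Subgroup.mem_sup_of_normal_right.1 hmem
      refine ⟨w, Subgroup.mem_map_of_mem A.subtype hw, fun _ => ?_⟩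
      have e' : (m : Γ) * w = u := congrArg Subtype.val e
      rw [← e']
      simpa [Subgroup.mem_subgroupOf] using hm
    · exact ⟨1, one_mem _, fun h => absurd h hu⟩
  choose w hwCY hwH using hex
  set T2 := T ∪ T.image (fun t => t⁻¹) with hT2
  have hT2c : T2.card ≤ 2 * T.card := by
    refine (Finset.card_union_le _ _).trans ?_
    have : (T.image (fun t => t⁻¹)).card ≤ T.card := Finset.card_image_le
    omega
  have hT2H : ∀ t ∈ T2, t ∈ H := by
    intro t ht
    rcases Finset.mem_union.1 ht with ht | ht
    · exact hTH t ht
    · obtain ⟨s, hs, rfl⟩ := Finset.mem_image.1 ht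
      exact H.inv_mem (hTH s hs)
  set F1 := X.image fun u => u * (w u)⁻¹ with hF1
  set F2 := E.image (fun e : A => (e : Γ)) with hF2
  set c : Γ × A → Γ := fun p => p.1 * p.2 * p.1⁻¹ with hc
  set F3 := (T2 ×ˢ Y).image fun p => c p * (w (c p))⁻¹ with hF3
  have hcA : ∀ p, c p ∈ A := fun p => Subgroup.Normal.conj_mem ‹A.Normal› _ p.2.2 _
  set S := T ∪ F1 ∪ F2 ∪ F3 with hS
  have hScard : S.card ≤ (A ⊔ H).index * d Γ + (A ⊔ H).index + E.card
      + 2 * ((A ⊔ H).index * d Γ) * Y.card := by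
    have h1 : F1.card ≤ X.card := Finset.card_image_le
    have h2 : F2.card ≤ E.card := Finset.card_image_le
    have h3 : F3.card ≤ T2.card * Y.card := by
      rw [← Finset.card_product]; exact Finset.card_image_le
    have h4 : T2.card * Y.card ≤ 2 * ((A ⊔ H).index * d Γ) * Y.card :=
      Nat.mul_le_mul_right _ (by omega)
    have h5 := Finset.card_union_le (T ∪ F1 ∪ F2) F3
    have h6 := Finset.card_union_le (T ∪ F1) F2
    have h7 := Finset.card_union_le T F1
    rw [← hS] at h5
    omega
  refine (d_le_of_closure H S ?_).trans hScard
  set K := Subgroup.closure (S : Set Γ) with hK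
  have hSK : ∀ s ∈ S, s ∈ K := fun s hs => Subgroup.subset_closure hs
  have hTS : ∀ t ∈ T, t ∈ S := fun t ht => by simp [hS, ht]
  have hF1S : ∀ t ∈ F1, t ∈ S := fun t ht => by simp only [hS, Finset.mem_union]; tauto
  have hF2S : ∀ t ∈ F2, t ∈ S := fun t ht => by simp only [hS, Finset.mem_union]; tauto
  have hF3S : ∀ t ∈ F3, t ∈ S := fun t ht => by simp only [hS, Finset.mem_union]; tauto
  have hKH : K ≤ H := by
    rw [hK, Subgroup.closure_le]
    intro s hs
    have hs : s ∈ S := hs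
    simp only [hS, Finset.mem_union] at hs
    rcases hs with ((hs | hs) | hs) | hs
    · exact hTH s hs
    · obtain ⟨u, hu, rfl⟩ := Finset.mem_image.1 hs
      exact hwH u (hXA u hu)
    · obtain ⟨e, he, rfl⟩ := Finset.mem_image.1 hs
      exact hEM e he
    · obtain ⟨p, hp, rfl⟩ := Finset.mem_image.1 hs
      exact hwH _ (hcA p)
  have hT2K : ∀ t ∈ T2, t ∈ K := by
    intro t ht
    rcases Finset.mem_union.1 ht with ht | ht
    · exact hSK t (hTS t ht)
    · obtain ⟨s, hs, rfl⟩ := Finset.mem_image.1 ht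
      exact K.inv_mem (hSK s (hTS s hs))
  set N := K ⊓ A with hN
  set B := N ⊔ CY with hB
  have hNB : N ≤ B := le_sup_left
  have hCB : CY ≤ B := le_sup_right
  have hBA : B ≤ A := sup_le inf_le_right hCYA
  have key : ∀ t ∈ T2, ∀ b ∈ B, t * b * t⁻¹ ∈ B := by
    intro t ht
    have : B ≤ B.comap (MulAut.conj t).toMonoidHom := by
      refine sup_le ?_ ?_
      · rintro n ⟨hnK, hnA⟩
        refine hNB ⟨?_, ?_⟩
        · exact K.mul_mem (K.mul_mem (hT2K t ht) hnK) (K.inv_mem (hT2K t ht))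
        · exact Subgroup.Normal.conj_mem ‹A.Normal› _ hnA _
      · rw [hCY, Subgroup.map_le_iff_le_comap, Subgroup.closure_le]
        intro y hy
        change t * y * t⁻¹ ∈ B
        have e : t * y * t⁻¹ = (c (t, y) * (w (c (t, y)))⁻¹) * w (c (t, y)) := by
          simp [hc]
        rw [e]
        refine B.mul_mem (hNB ⟨?_, ?_⟩) (hCB (hwCY _))
        · exact hSK _ (hF3S _ (Finset.mem_image.2 ⟨(t, y), Finset.mem_product.2 ⟨ht, hy⟩, rfl⟩))
        · exact A.mul_mem (hcA _) (A.inv_mem (hCYA (hwCY _)))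
    exact fun b hb => this hb
  have hHn : H ≤ Subgroup.normalizer (B : Set Γ) := by
    refine hT.trans (sup_le ?_ ?_)
    · rw [Subgroup.closure_le]
      intro t ht
      rw [SetLike.mem_coe, Subgroup.mem_normalizer_iff]
      intro b
      refine ⟨key t (Finset.mem_union_left _ ht) b, fun h => ?_⟩
      have := key t⁻¹ (Finset.mem_union_right _ (Finset.mem_image_of_mem _ ht)) _ h
      have e : t⁻¹ * (t * b * t⁻¹) * t⁻¹⁻¹ = b := by group
      rwa [e] at this
    · rintro a ⟨ha, -⟩
      rw [Subgroup.mem_normalizer_iff]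
      have hh : ∀ b ∈ A, a * b * a⁻¹ = b := fun b hb => by rw [hAab' a ha b hb]; group
      intro b
      refine ⟨fun hb => by rwa [hh b (hBA hb)], fun hb => ?_⟩
      have hbA : b ∈ A := by
        have := Subgroup.Normal.conj_mem ‹A.Normal› _ (hBA hb) a⁻¹
        have e : a⁻¹ * (a * b * a⁻¹) * a⁻¹⁻¹ = b := by group
        rwa [e] at this
      rwa [hh b hbA] at hb
  have hAB : A ≤ B := by
    apply hX B
    · intro u hu
      have e : u = (u * (w u)⁻¹) * w u := by simp
      rw [e]
      refine B.mul_mem (hNB ⟨?_, ?_⟩) (hCB (hwCY _))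
      · exact hSK _ (hF1S _ (Finset.mem_image_of_mem _ hu))
      · exact A.mul_mem (hXA u hu) (A.inv_mem (hCYA (hwCY _)))
    · intro h hh b hb
      exact (Subgroup.mem_normalizer_iff.1 (hHn hh) b).1 hb
  have hMK : A ⊓ H ≤ K := by
    rintro m ⟨hmA, hmH⟩
    have : ∃ n ∈ N, ∃ y ∈ CY, n * y = m := by
      have hmB := hAB hmA
      rw [hB, Subgroup.sup_eq_closure] at hmB
      clear hmA hmH
      induction hmB using Subgroup.closure_induction with
      | mem n hn =>
        rcases hn with hn | hn
        · exact ⟨n, hn, 1, one_mem _, by simp⟩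
        · exact ⟨1, one_mem _, n, hn, by simp⟩
      | inv z _ hz =>
        obtain ⟨n, hn, y, hy, rfl⟩ := hz
        refine ⟨n⁻¹, N.inv_mem hn, y⁻¹, CY.inv_mem hy, ?_⟩
        rw [← mul_inv_rev, hAab' y (hCYA hy) n hn.2]
      | one => exact ⟨1, one_mem _, 1, one_mem _, by simp⟩
      | mul _ _ _ _ h1 h2 =>
        obtain ⟨n, hn, y, hy, rfl⟩ := h1
        obtain ⟨n', hn', y', hy', rfl⟩ := h2
        refine ⟨n * n', N.mul_mem hn hn', y * y', CY.mul_mem hy hy', ?_⟩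
        have := hAab' y (hCYA hy) n' hn'.2
        rw [mul_assoc, ← mul_assoc n', ← this]; group
    obtain ⟨n, hn, y, hy, rfl⟩ := this
    have hyH : y ∈ H := by
      have := H.mul_mem (H.inv_mem (hKH hn.1)) hmH
      simpa using this
    refine K.mul_mem hn.1 ?_
    obtain ⟨y', hy', rfl⟩ := hy
    have h1 : y' ∈ Subgroup.closure (E : Set A) := hYE ⟨hy', hyH⟩
    have h2 : Subgroup.closure (E : Set A) ≤ K.comap A.subtype := by
      rw [Subgroup.closure_le]
      intro e he
      exact hSK _ (hF2S _ (Finset.mem_image_of_mem _ he))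
    exact h2 h1
  refine le_antisymm hKH (hT.trans (sup_le ?_ hMK))
  rw [Subgroup.closure_le]
  intro t ht
  exact hSK t (hTS t ht)

lemma index_eq_mul (A H : Subgroup Γ) [A.Normal] :
    (A ⊔ H).index * (H.subgroupOf A).index = H.index := by
  have h1 := Subgroup.relIndex_mul_index (le_sup_right : H ≤ A ⊔ H)
  have h2 : H.relIndex (A ⊔ H) = H.relIndex A := by
    refine (Nat.card_eq_of_bijective
      (Subgroup.quotientSubgroupOfEmbeddingOfLE H (le_sup_left : A ≤ A ⊔ H))
      ⟨(Subgroup.quotientSubgroupOfEmbeddingOfLE H _).injective, ?_⟩).symm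
    intro q
    induction q using QuotientGroup.induction_on with
    | H g =>
      obtain ⟨a, ha, h, hh, e⟩ := Subgroup.mem_sup_of_normal_left.1 g.2
      refine ⟨((⟨a, ha⟩ : A) : A ⧸ H.subgroupOf A), ?_⟩
      rw [Subgroup.quotientSubgroupOfEmbeddingOfLE_apply_mk, QuotientGroup.eq,
        Subgroup.mem_subgroupOf]
      have : a⁻¹ * (g : Γ) = h := by rw [← e]; group
      change a⁻¹ * (g : Γ) ∈ H
      rw [this]; exact hh
  rw [← h1, h2, mul_comm]; rfl

lemma b_tendsto (A : Subgroup Γ) (hAinf : Infinite A)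
    (Γc : ℕ → Subgroup Γ) (hchain : ∀ j, Γc (j + 1) ≤ Γc j)
    (hfi : ∀ j, (Γc j).FiniteIndex) (hint : (⨅ j, Γc j) = ⊥) :
    Tendsto (fun j => ((Γc j).subgroupOf A).index) atTop atTop := by
  classical
  have hanti : Antitone Γc := antitone_nat_of_succ_le hchain
  rw [tendsto_atTop]
  intro n
  obtain ⟨F, hF⟩ := Infinite.exists_subset_card_eq A n
  have h1 : ∀ p ∈ F ×ˢ F, ∀ᶠ j in atTop, p.1 ≠ p.2 → ((p.1⁻¹ * p.2 : A) : Γ) ∉ Γc j := by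
    rintro ⟨f, g⟩ -
    by_cases hfg : f = g
    · simp [hfg]
    have h2 : ((f⁻¹ * g : A) : Γ) ∉ (⨅ j, Γc j) := by
      rw [hint, Subgroup.mem_bot]
      intro h
      have : f⁻¹ * g = 1 := Subtype.ext h
      exact hfg (inv_mul_eq_one.1 this)
    rw [Subgroup.mem_iInf] at h2
    push Not at h2
    obtain ⟨i, hi⟩ := h2
    filter_upwards [eventually_ge_atTop i] with j hj _ hmem
    exact hi (hanti hj hmem)
  rw [← Filter.eventually_all_finset] at h1
  filter_upwards [h1] with j hj
  have := hfi j
  rw [← hF]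
  have : Function.Injective (fun f : F => ((f : A) : A ⧸ (Γc j).subgroupOf A)) := by
    rintro ⟨f, hf⟩ ⟨g, hg⟩ h
    by_contra hne
    have := hj (f, g) (Finset.mem_product.2 ⟨hf, hg⟩) (fun h => hne (Subtype.ext h))
    have h' : (f : A ⧸ (Γc j).subgroupOf A) = (g : A ⧸ (Γc j).subgroupOf A) := h
    have h2 := QuotientGroup.eq.1 h'
    exact this (Subgroup.mem_subgroupOf.1 h2)
  have h3 := Nat.card_le_card_of_injective _ this
  simpa [Subgroup.index] using h3

end

lemma tendsto_bound (dn : ℝ) : Tendsto (fun b : ℕ => dn / (b : ℝ) +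
        (1 + (2 * dn + 1) * Real.logb 2 b) / b) atTop (nhds 0) := by
  have h1 : Tendsto (fun b : ℕ => Real.log b / (b : ℝ)) atTop (nhds 0) :=
    (Real.isLittleO_log_id_atTop.tendsto_div_nhds_zero).comp tendsto_natCast_atTop_atTop
  have h2 : Tendsto (fun b : ℕ => (dn + 1) / (b : ℝ)) atTop (nhds 0) :=
    tendsto_const_div_atTop_nhds_zero_nat _
  have := h2.add (h1.const_mul ((2 * dn + 1) / Real.log 2))
  rw [mul_zero, add_zero] at this
  refine this.congr fun b => ?_
  rw [Real.logb]; ring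

/-- Let `Γ` be a `d`-generated group with an infinite abelian normal subgroup `A`
which is the normal closure of a single element, and `(Γⱼ)` a chain of finite index
subgroups with trivial intersection. With `aⱼ = [Γ : AΓⱼ]` and `bⱼ = [A : A ∩ Γⱼ]`,
one has `d(Γⱼ) ≤ aⱼd + aⱼ + (2daⱼ+1)log₂ bⱼ`, hence
`(d(Γⱼ)-1)/[Γ:Γⱼ] ≤ d/bⱼ + (1+(2d+1)log₂ bⱼ)/bⱼ`, and the rank gradient is `0`. -/
theorem rank_gradient_zero_of_abelian_normal {Γ : Type*} [Group Γ] [Group.FG Γ]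
    (dn : ℕ) (hd : d Γ = dn)
    (A : Subgroup Γ) (hAnorm : A.Normal) (hAinf : Infinite A)
    (hAab : ∀ x y : A, x * y = y * x)
    (hAprin : ∃ x : Γ, A = Subgroup.normalClosure {x})
    (Γc : ℕ → Subgroup Γ) (hchain : ∀ j, Γc (j + 1) ≤ Γc j)
    (hfi : ∀ j, (Γc j).FiniteIndex) (hint : (⨅ j, Γc j) = ⊥) :
    (∀ j, (d (Γc j) : ℝ) ≤ ((A ⊔ Γc j).index : ℝ) * dn + ((A ⊔ Γc j).index : ℝ) +
        (2 * dn * ((A ⊔ Γc j).index : ℝ) + 1) *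
          Real.logb 2 (((Γc j).subgroupOf A).index)) ∧
    (∀ j, ((d (Γc j) : ℝ) - 1) / (Γc j).index ≤
        (dn : ℝ) / ((Γc j).subgroupOf A).index +
        (1 + (2 * (dn : ℝ) + 1) * Real.logb 2 (((Γc j).subgroupOf A).index)) /
          ((Γc j).subgroupOf A).index) ∧
    Tendsto (fun j => ((d (Γc j) : ℝ) - 1) / (Γc j).index) atTop (nhds 0) := by
  obtain ⟨x, hx⟩ := hAprin
  have P1 : ∀ j, (d (Γc j) : ℝ) ≤ ((A ⊔ Γc j).index : ℝ) * dn + ((A ⊔ Γc j).index : ℝ) +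
        (2 * dn * ((A ⊔ Γc j).index : ℝ) + 1) *
          Real.logb 2 (((Γc j).subgroupOf A).index) := by
    intro j
    have := hfi j
    obtain ⟨r, s, hr, hs, hle⟩ := d_bound_nat A (Γc j) hAab x hx
    rw [hd] at hle
    have hlog : ∀ r : ℕ, 2 ^ r ≤ ((Γc j).subgroupOf A).index →
        (r : ℝ) ≤ Real.logb 2 (((Γc j).subgroupOf A).index) := by
      intro r hr
      have hpos : 0 < ((Γc j).subgroupOf A).index := lt_of_lt_of_le (by positivity) hr
      rw [Real.le_logb_iff_rpow_le (by norm_num) (by exact_mod_cast hpos), Real.rpow_natCast]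
      exact_mod_cast hr
    have h1 := hlog r hr
    have h2 := hlog s hs
    have h3 : (d (Γc j) : ℝ) ≤ ((A ⊔ Γc j).index : ℝ) * dn + ((A ⊔ Γc j).index : ℝ) + s +
        2 * (((A ⊔ Γc j).index : ℝ) * dn) * r := by exact_mod_cast hle
    have h4 := mul_le_mul_of_nonneg_left h1
      (show (0 : ℝ) ≤ 2 * (((A ⊔ Γc j).index : ℝ) * dn) by positivity)
    linarith
  have hb1 : ∀ j, (1 : ℝ) ≤ ((Γc j).subgroupOf A).index := by
    intro j
    have := hfi j
    exact_mod_cast Nat.one_le_iff_ne_zero.2 Subgroup.FiniteIndex.index_ne_zero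
  have ha1 : ∀ j, (1 : ℝ) ≤ (A ⊔ Γc j).index := by
    intro j
    have := hfi j
    have : (A ⊔ Γc j).FiniteIndex := Subgroup.finiteIndex_of_le (le_sup_right : Γc j ≤ _)
    exact_mod_cast Nat.one_le_iff_ne_zero.2 Subgroup.FiniteIndex.index_ne_zero
  have hab : ∀ j, ((Γc j).index : ℝ) =
      ((A ⊔ Γc j).index : ℝ) * ((Γc j).subgroupOf A).index := by
    intro j
    exact_mod_cast (index_eq_mul A (Γc j)).symm
  have P2 : ∀ j, ((d (Γc j) : ℝ) - 1) / (Γc j).index ≤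
        (dn : ℝ) / ((Γc j).subgroupOf A).index +
        (1 + (2 * (dn : ℝ) + 1) * Real.logb 2 (((Γc j).subgroupOf A).index)) /
          ((Γc j).subgroupOf A).index := by
    intro j
    have p := P1 j
    have hL : 0 ≤ Real.logb 2 (((Γc j).subgroupOf A).index) :=
      Real.logb_nonneg (by norm_num) (hb1 j)
    rw [hab j, ← add_div]
    have a1 := ha1 j
    have b1 := hb1 j
    generalize (((A ⊔ Γc j).index : ℕ) : ℝ) = a at *
    generalize ((((Γc j).subgroupOf A).index : ℕ) : ℝ) = b at *
    generalize Real.logb 2 b = L at *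
    rw [div_le_div_iff₀ (by positivity) (by positivity)]
    have : (d (Γc j) : ℝ) - 1 ≤ (dn + (1 + (2 * dn + 1) * L)) * a := by nlinarith
    calc ((d (Γc j) : ℝ) - 1) * b ≤ ((dn + (1 + (2 * dn + 1) * L)) * a) * b :=
          mul_le_mul_of_nonneg_right this (by linarith)
      _ = _ := by ring
  refine ⟨P1, P2, ?_⟩
  have hbt := b_tendsto A hAinf Γc hchain hfi hint
  have hup := (tendsto_bound dn).comp hbt
  have hlo : Tendsto (fun j => (-1 : ℝ) / (((Γc j).subgroupOf A).index : ℝ)) atTop (nhds 0) :=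
    (tendsto_const_div_atTop_nhds_zero_nat (-1 : ℝ)).comp hbt
  refine tendsto_of_tendsto_of_tendsto_of_le_of_le hlo hup (fun j => ?_) P2
  have a1 := ha1 j
  have b1 := hb1 j
  have hd0 : (0 : ℝ) ≤ d (Γc j) := Nat.cast_nonneg _
  change (-1 : ℝ) / (((Γc j).subgroupOf A).index : ℝ) ≤ ((d (Γc j) : ℝ) - 1) / (Γc j).index
  rw [hab j]
  generalize (((A ⊔ Γc j).index : ℕ) : ℝ) = a at *
  generalize ((((Γc j).subgroupOf A).index : ℕ) : ℝ) = b at *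
  rw [div_le_div_iff₀ (by positivity) (by positivity)]
  nlinarith [mul_nonneg hd0 (by linarith : (0:ℝ) ≤ b), mul_nonneg (by linarith : (0:ℝ) ≤ a - 1) (by linarith : (0:ℝ) ≤ b)]
end
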